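/- arXiv:math/0302017 — 4 statements merged into one kernel-verified Lean document; each statement's English description precedes it below -/
import Mathlib

section
/- Let p be a prime and let R and S be commutative Noetherian local pro-p domains, both of characteristic zero and both of Krull dimension strictly greater than 2. Then for every natural number n and every subgroup G of GL_n(R) there exist a natural number m and an injective group homomorphism from G into GL_m(S). -/
/-!
Let `A_d = ℤ_p⟦X₁, …, X_d⟧`. By Cohen's structure theorem `R` is finite over a subring `A_d`, and
`S` contains `A_e` with `e + 1 = dim S`, so `e ≥ 2`. Two embeddings then give the result.

* `R` lies in a matrix ring over `A_d`. If `B = A_{d-1}`, then `R = B⟦X⟧[θ]` up to denominators,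
  with `θ` a root of a separable polynomial `F` over `B⟦X⟧`. After an injective endomorphism of
  `B⟦X⟧` (translate `X`, then rescale it) Newton's method lifts a root of `F` modulo `X` to `O⟦X⟧`,
  where `O` is a domain finite over `B`; hence `R` embeds into `O⟦X⟧`, and `O` into matrices over
  `B` by induction on `d`.
* `A_d` embeds into `A_2`. Substituting `XY` for `Y` embeds `D⟦X⟧⟦Y⟧` into `D[Y]⟦X⟧`, and a
  lacunary series transcendental over `D[X]` embeds `D[X][Y]` into `D⟦X⟧`; together these embed
  `D⟦X⟧⟦Y⟧⟦Z⟧` into `D⟦X⟧⟦Y⟧`.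
-/

universe u v w

namespace LinearTransfer

section AdicEvaluation

open PowerSeries

variable {B R : Type*} [CommRing B] [CommRing R]

theorem eq_of_forall_sub_mem_pow (I : Ideal R) [IsHausdorff I R] {a b : R}
    (h : ∀ n, a - b ∈ I ^ n) : a = b := by
  refine IsHausdorff.eq_iff_smodEq (I := I) |>.2 fun n => SModEq.sub_mem.2 ?_
  simpa using h n

theorem exists_ringHom_powerSeries (I : Ideal R) [IsAdicComplete I R] (φ : B →+* R) {x : R}
    (hx : x ∈ I) : ∃ ψ : B⟦X⟧ →+* R, ψ.comp C = φ ∧ ψ X = x := by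
  let : WithIdeal R := ⟨I⟩
  let : UniformSpace B := ⊥
  have : DiscreteTopology B := ⟨rfl⟩
  obtain ⟨_, _⟩ := (IsAdic.isAdicComplete_iff (I := I) rfl).1 ‹_›
  have hx' : HasEval x := (Ideal.hasBasis_nhds_zero_adic I).tendsto_right_iff.2 fun n _ =>
    Filter.eventually_atTop.2 ⟨n, fun m hm => Ideal.pow_le_pow_right hm (Ideal.pow_mem_pow hx m)⟩
  refine ⟨eval₂Hom (φ := φ) continuous_of_discreteTopology hx', RingHom.ext fun b => ?_, ?_⟩ <;>
    simp [coe_eval₂Hom]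

theorem map_sub_sum_mem_pow {I : Ideal R} (ψ : B⟦X⟧ →+* R) (hX : ψ X ∈ I) (f : B⟦X⟧) (n : ℕ) :
    ψ f - ∑ i ∈ Finset.range n, ψ (C (coeff i f)) * ψ X ^ i ∈ I ^ n := by
  have htrunc : (trunc n f : B⟦X⟧) = ∑ i ∈ Finset.range n, C (coeff i f) * X ^ i := by
    rw [← Polynomial.eval₂_C_X_eq_coe, eval₂_trunc_eq_sum_range]
  have hf := congrArg ψ (eq_X_pow_mul_shift_add_trunc n f)
  simp only [htrunc, map_add, map_mul, map_pow, map_sum] at hf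
  rw [hf, add_sub_cancel_right]
  exact Ideal.mul_mem_right _ _ (Ideal.pow_mem_pow hX n)

theorem ringHom_powerSeries_ext (I : Ideal R) [IsHausdorff I R] {ψ₁ ψ₂ : B⟦X⟧ →+* R}
    (hX : ψ₁ X ∈ I) (hC : ψ₁.comp C = ψ₂.comp C) (hXX : ψ₁ X = ψ₂ X) : ψ₁ = ψ₂ := by
  refine RingHom.ext fun f => eq_of_forall_sub_mem_pow I fun n => ?_
  have h₁ := map_sub_sum_mem_pow ψ₁ hX f n
  have h₂ := map_sub_sum_mem_pow ψ₂ (hXX ▸ hX) f n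
  have hC' (b : B) : ψ₁ (C b) = ψ₂ (C b) := RingHom.congr_fun hC b
  simp only [hC', hXX] at h₁
  simpa using sub_mem h₁ h₂

theorem exists_ringHom_padicInt (p : ℕ) [Fact p.Prime] (I : Ideal R) [IsAdicComplete I R]
    (hp : (p : R) ∈ I) : Nonempty (ℤ_[p] →+* R) := by
  have hchar (n : ℕ) : ringChar (R ⧸ I ^ n) ∣ p ^ n := ringChar.dvd <| by
    simpa using Ideal.Quotient.eq_zero_iff_mem.2 (Ideal.pow_mem_pow hp n)
  let F (n : ℕ) : ℤ_[p] →+* R ⧸ I ^ n :=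
    (ZMod.castHom (hchar n) (R ⧸ I ^ n)).comp (PadicInt.toZModPow n)
  refine ⟨IsAdicComplete.liftRingHom I F fun {m n} hle => ?_⟩
  have hcast : (Ideal.Quotient.factorPow I hle).comp (ZMod.castHom (hchar n) (R ⧸ I ^ n)) =
      (ZMod.castHom (hchar m) (R ⧸ I ^ m)).comp (ZMod.castHom (pow_dvd_pow p hle) _) :=
    RingHom.ext_zmod _ _
  rw [← RingHom.comp_assoc, hcast, RingHom.comp_assoc, PadicInt.zmod_cast_comp_toZModPow m n hle]

end AdicEvaluation

section AdicCompleteness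

open PowerSeries

variable {B : Type*} [CommRing B] {I : Ideal B}

theorem mem_comap_constantCoeff_pow_iff {n : ℕ} {f : B⟦X⟧} :
    f ∈ I.comap constantCoeff ^ n ↔ ∀ k, coeff k f ∈ I ^ (n - k) := by
  constructor
  · induction n generalizing f with
    | zero => simp
    | succ n ih =>
      rw [pow_succ']
      intro hf
      refine Submodule.mul_induction_on hf (fun g hg h hh k => ?_) fun g h hg hh k => ?_
      · rw [coeff_mul]
        refine sum_mem fun ij hij => ?_
        obtain ⟨i, j⟩ := ij
        obtain rfl : i + j = k := by simpa using hij
        rcases i with _ | i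
        · have hle : I * I ^ (n - j) ≤ I ^ (n + 1 - j) := by
            rw [← pow_succ']
            exact Ideal.pow_le_pow_right (by omega)
          simpa using hle (Ideal.mul_mem_mul hg (ih hh j))
        · exact Ideal.mul_mem_left _ _ (Ideal.pow_le_pow_right (by omega) (ih hh j))
      · rw [map_add]
        exact add_mem (hg k) (hh k)
  · intro h
    have hX : (X : B⟦X⟧) ∈ I.comap constantCoeff := by simp
    have hC : I.map C ≤ I.comap (constantCoeff (R := B)) := by
      rw [Ideal.map_le_iff_le_comap, Ideal.comap_comap, constantCoeff_comp_C, Ideal.comap_id]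
    refine (Submodule.sub_mem_iff_left _ (sum_mem fun k hk => ?_)).1
      (map_sub_sum_mem_pow (RingHom.id B⟦X⟧) hX f n)
    rw [← Nat.sub_add_cancel (Finset.mem_range.1 hk).le, pow_add]
    refine Ideal.mul_mem_mul (Ideal.pow_right_mono hC _ ?_) (Ideal.pow_mem_pow hX k)
    rw [← Ideal.map_pow]
    exact Ideal.mem_map_of_mem _ (by simpa using h k)

instance isHausdorff_comap_constantCoeff [IsHausdorff I B] :
    IsHausdorff (I.comap constantCoeff) B⟦X⟧ where
  haus' f hf := by
    refine PowerSeries.ext fun k => eq_of_forall_sub_mem_pow I fun n => ?_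
    have h := hf (n + k)
    rw [SModEq.zero, smul_eq_mul, Ideal.mul_top, mem_comap_constantCoeff_pow_iff] at h
    simpa using h k

instance isAdicComplete_comap_constantCoeff [IsAdicComplete I B] :
    IsAdicComplete (I.comap constantCoeff) B⟦X⟧ where
  prec' f hf := by
    simp only [SModEq.sub_mem, smul_eq_mul, Ideal.mul_top, mem_comap_constantCoeff_pow_iff,
      map_sub] at hf ⊢
    have hlim (k : ℕ) : ∃ a, ∀ n, coeff k (f (n + k)) - a ∈ I ^ n := by
      obtain ⟨a, ha⟩ := IsPrecomplete.prec (I := I) inferInstance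
        (f := fun n => coeff k (f (n + k))) fun {m n} hmn => by
          simpa [SModEq.sub_mem] using hf (Nat.add_le_add_right hmn k) k
      exact ⟨a, fun n => by simpa [SModEq.sub_mem] using ha n⟩
    choose a ha using hlim
    refine ⟨PowerSeries.mk a, fun n k => ?_⟩
    rw [coeff_mk]
    rcases le_total n k with h | h
    · simp [Nat.sub_eq_zero_of_le h]
    · simpa [Nat.sub_add_cancel h] using ha k (n - k)

theorem maximalIdeal_powerSeries_eq_comap [IsLocalRing B] :
    IsLocalRing.maximalIdeal B⟦X⟧ = (IsLocalRing.maximalIdeal B).comap constantCoeff := by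
  ext f
  simp [PowerSeries.isUnit_iff_constantCoeff]

end AdicCompleteness

section Translation

open PowerSeries

variable {B : Type*} [CommRing B]

theorem exists_injective_translation (I : Ideal B) [IsAdicComplete I B] {a : B} (ha : a ∈ I) :
    ∃ τ : B⟦X⟧ →+* B⟦X⟧, Function.Injective τ ∧ τ.comp C = C ∧ τ X = X + C a := by
  have hmem {b : B} (hb : b ∈ I) : X + C b ∈ I.comap constantCoeff := by simpa using hb
  obtain ⟨τ, hτC, hτX⟩ := exists_ringHom_powerSeries _ (C (R := B)) (hmem ha)
  obtain ⟨σ, hσC, hσX⟩ := exists_ringHom_powerSeries _ (C (R := B)) (hmem (neg_mem ha))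
  have hσCa : σ (C a) = C a := RingHom.congr_fun hσC a
  have hστX : σ (τ X) = X := by simp [hτX, hσX, hσCa]
  have hinv : σ.comp τ = RingHom.id B⟦X⟧ :=
    ringHom_powerSeries_ext (I.comap constantCoeff) (by simp [hστX])
      (by rw [RingHom.comp_assoc, hτC, hσC, RingHom.id_comp]) hστX
  exact ⟨τ, Function.LeftInverse.injective (RingHom.congr_fun hinv), hτC, hτX⟩

-- A power series vanishes at only finitely many points of small radius, whence translating by a
-- sufficiently high power of a nonzero element of `I` works.
theorem exists_injective_translation_constantCoeff_ne_zero [IsDomain B] {I : Ideal B}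
    [IsAdicComplete I B] (hI : I ≠ ⊥) {f : B⟦X⟧} (hf : f ≠ 0) :
    ∃ τ : B⟦X⟧ →+* B⟦X⟧, Function.Injective τ ∧ τ.comp C = C ∧ constantCoeff (τ f) ≠ 0 := by
  obtain ⟨π, hπ, hπ0⟩ := Submodule.exists_mem_ne_zero_of_ne_bot hI
  obtain ⟨n, hn⟩ : ∃ n, coeff f.order.toNat f ∉ I ^ n := by
    by_contra! h
    exact coeff_order hf (eq_of_forall_sub_mem_pow I fun n => by simpa using h n)
  have ha : π ^ (n + 1) ∈ I := Ideal.pow_mem_of_mem I hπ _ n.succ_pos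
  obtain ⟨τ, hτ, hτC, hτX⟩ := exists_injective_translation I ha
  refine ⟨τ, hτ, hτC, ?_⟩
  let ψ : B⟦X⟧ →+* B := constantCoeff.comp τ
  have hψX : ψ X = π ^ (n + 1) := by simp [ψ, hτX]
  have hψC (b : B) : ψ (C b) = b := by simp [ψ, RingHom.congr_fun hτC b, ← RingHom.comp_apply]
  set g := f.divXPowOrder
  have hg0 : constantCoeff g = coeff f.order.toNat f := constantCoeff_divXPowOrder
  have hψg : ψ g ≠ 0 := fun h0 => hn <| by
    rw [← hg0]
    have h := map_sub_sum_mem_pow ψ (Ideal.mem_span_singleton_self (ψ X)) g 1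
    have hle : Ideal.span {ψ X} ≤ I ^ n := (Ideal.span_singleton_le_iff_mem _).2 <| by
      rw [hψX]
      exact Ideal.pow_le_pow_right n.le_succ (Ideal.pow_mem_pow hπ _)
    rw [pow_one] at h
    simpa [h0, hψC] using hle h
  change ψ f ≠ 0
  rw [← X_pow_order_mul_divXPowOrder (f := f), map_mul, map_pow, hψX]
  exact mul_ne_zero (pow_ne_zero _ (pow_ne_zero _ hπ0)) hψg

theorem C_mul_X_dvd_rescale_sub (e : B) (f : B⟦X⟧) :
    C e * X ∣ rescale e f - C (constantCoeff f) := by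
  refine ⟨mk fun n => e ^ n * coeff (n + 1) f, PowerSeries.ext fun n => ?_⟩
  rcases n with _ | n
  · rw [map_sub, coeff_rescale]
    simp
  · simp [mul_assoc, pow_succ', coeff_succ_X_mul]

end Translation

section Newton

open Polynomial

variable {R : Type*} [CommRing R] {I : Ideal R} [IsAdicComplete I R]

theorem exists_isFixedPt_of_contracting {Φ : R → R} (hmaps : Set.MapsTo Φ I I)
    (hΦ : ∀ n, ∀ a ∈ I, ∀ b ∈ I, a - b ∈ I ^ n → Φ a - Φ b ∈ I ^ (n + 1)) :
    ∃ a ∈ I, Function.IsFixedPt Φ a := by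
  have hmem (n : ℕ) : Φ^[n] 0 ∈ I := hmaps.iterate n (zero_mem I)
  have hstep (n : ℕ) : Φ^[n] 0 - Φ^[n + 1] 0 ∈ I ^ n := by
    induction n with
    | zero => simp
    | succ n ih =>
      rw [Function.iterate_succ_apply' _ (n + 1), Function.iterate_succ_apply' _ n]
      exact hΦ n _ (hmem n) _ (Function.iterate_succ_apply' Φ n 0 ▸ hmem (n + 1))
        (Function.iterate_succ_apply' Φ n 0 ▸ ih)
  have hcauchy : AdicCompletion.IsAdicCauchy I R (fun n => Φ^[n] 0) :=
    (AdicCompletion.isAdicCauchy_iff I R _).2 fun n => by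
      simpa only [SModEq.sub_mem, smul_eq_mul, Ideal.mul_top] using hstep n
  obtain ⟨a, ha⟩ := IsPrecomplete.prec (I := I) inferInstance hcauchy
  simp only [SModEq.sub_mem, smul_eq_mul, Ideal.mul_top] at ha
  have haI : a ∈ I := sub_sub_cancel (Φ^[1] 0) a ▸ sub_mem (hmem 1) (pow_one I ▸ ha 1)
  refine ⟨a, haI, eq_of_forall_sub_mem_pow I fun n => ?_⟩
  have hΦa : Φ^[n + 1] 0 - Φ a ∈ I ^ (n + 1) := by
    rw [Function.iterate_succ_apply']
    exact hΦ n _ (hmem n) a haI (ha n)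
  have := Ideal.pow_le_pow_right n.le_succ (sub_mem (ha (n + 1)) hΦa)
  rwa [sub_sub_sub_cancel_left] at this

theorem exists_isRoot_of_isUnit_eval_derivative {P : R[X]} (h0 : P.eval 0 ∈ I)
    (h1 : IsUnit (P.derivative.eval 0)) : ∃ t ∈ I, P.IsRoot t := by
  obtain ⟨u, hu⟩ := h1
  have hP' {b : R} (hb : b ∈ I) : 1 - ↑u⁻¹ * P.derivative.eval b ∈ I := by
    have h := I.mul_mem_left (-↑u⁻¹) (I.mem_of_dvd (sub_dvd_eval_sub b 0 P.derivative) (by simpa))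
    rwa [← hu, neg_mul, mul_sub, u.inv_mul, neg_sub] at h
  have hmaps : Set.MapsTo (fun t => t - ↑u⁻¹ * P.eval t) I I := fun a ha => by
    have h := add_mem (I.mem_of_dvd (sub_dvd_eval_sub a 0 P) (by simpa)) h0
    exact sub_mem ha (I.mul_mem_left _ (by simpa using h))
  obtain ⟨t, ht, hfix⟩ := exists_isFixedPt_of_contracting hmaps fun n a ha b hb hab => by
    obtain ⟨k, hk⟩ := P.binomExpansion b (a - b)
    have hmem : (a - b) * ((1 - ↑u⁻¹ * P.derivative.eval b) - ↑u⁻¹ * k * (a - b)) ∈ I ^ n * I :=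
      Ideal.mul_mem_mul hab (sub_mem (hP' hb) (I.mul_mem_left _ (sub_mem ha hb)))
    rw [add_sub_cancel] at hk
    rw [hk, pow_succ]
    convert hmem using 1
    ring
  exact ⟨t, ht, by simpa [Function.IsFixedPt] using hfix⟩

theorem exists_isRoot_of_eval_eq_sq_mul {F : R[X]} {θ d i j : R} (hi : i ∈ I) (hj : j ∈ I)
    (h0 : F.eval θ = d ^ 2 * i) (h1 : F.derivative.eval θ = d * (1 + j)) :
    ∃ y, y - θ ∈ I ∧ F.IsRoot y := by
  set Q : R[X] := (taylor θ F).divX.divX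
  have hF (t : R) : F.eval (θ + d * t) = d ^ 2 * (i + (1 + j) * t + t ^ 2 * Q.eval (d * t)) := by
    have h := congrArg (eval (d * t)) (divX_mul_X_add (taylor θ F))
    rw [← divX_mul_X_add (taylor θ F).divX] at h
    simp only [coeff_divX, zero_add, taylor_coeff_one, taylor_coeff_zero, eval_add, eval_mul,
      eval_X, eval_C, taylor_eval] at h
    rw [add_comm, ← h, h0, h1]
    ring
  have hunit : IsUnit (1 + j) := by
    have := Ideal.mem_jacobson_bot.1 (IsAdicComplete.le_jacobson_bot I hj) 1
    rwa [mul_one, add_comm] at this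
  obtain ⟨t, ht, hroot⟩ := exists_isRoot_of_isUnit_eval_derivative (I := I)
    (P := C i + C (1 + j) * X + X ^ 2 * Q.comp (C d * X)) (by simpa) (by simpa)
  refine ⟨θ + d * t, ?_, ?_⟩
  · simpa using I.mul_mem_left d ht
  · rw [IsRoot.def, hF]
    simp only [IsRoot.def, eval_add, eval_mul, eval_C, eval_X, eval_pow, eval_comp] at hroot
    rw [hroot, mul_zero]

end Newton

section VariableReduction

open PowerSeries

-- Substituting `X * Y` for the outer variable moves the coefficient of `X ^ a * Y ^ j` to the
-- monomial `X ^ (a + j) * Y ^ j`, whose degree in `Y` is bounded by its degree in `X`.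
theorem exists_injective_powerSeries_powerSeries_polynomial (D : Type*) [CommRing D] :
    ∃ ψ : D⟦X⟧⟦X⟧ →+* (Polynomial D)⟦X⟧, Function.Injective ψ := by
  have hX : (X : (Polynomial D)⟦X⟧) ∈ Ideal.span {X} := Ideal.mem_span_singleton_self X
  obtain ⟨ψ, hψC, hψX⟩ := exists_ringHom_powerSeries (Ideal.span {(X : (Polynomial D)⟦X⟧)})
    (PowerSeries.map (Polynomial.C : D →+* Polynomial D))
    (Ideal.mul_mem_right (C Polynomial.X) _ hX)
  have hcoeff (f : D⟦X⟧⟦X⟧) (a j : ℕ) : (coeff (a + j) (ψ f)).coeff j = coeff a (coeff j f) := by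
    have hterm (i : ℕ) : (coeff (a + j) (ψ (C (coeff i f)) * ψ X ^ i)).coeff j =
        if i = j then coeff a (coeff j f) else 0 := by
      rw [← RingHom.comp_apply, hψC, hψX, mul_pow, mul_left_comm, ← map_pow, coeff_X_pow_mul']
      rcases eq_or_ne i j with rfl | hij
      · rw [if_pos (Nat.le_add_left i a), coeff_mul_C]
        simp
      · split_ifs
        · rw [coeff_mul_C]
          simp [Polynomial.coeff_X_pow, hij.symm]
        · simp
    have h := map_sub_sum_mem_pow ψ (I := Ideal.span {X})
      (hψX ▸ Ideal.mul_mem_right _ _ hX) f (a + j + 1)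
    rw [Ideal.span_singleton_pow, Ideal.mem_span_singleton, X_pow_dvd_iff] at h
    rw [sub_eq_zero.1 ((map_sub _ _ _).symm.trans (h (a + j) (Nat.lt_succ_self _))), map_sum,
      Polynomial.finsetSum_coeff]
    simp only [hterm]
    simp
  refine ⟨ψ, fun f g hfg => PowerSeries.ext fun j => PowerSeries.ext fun a => ?_⟩
  rw [← hcoeff, ← hcoeff, hfg]

variable {D : Type*} [CommRing D]

theorem natDegree_eval_le {N : ℕ} {P : Polynomial (Polynomial D)}
    (hN : ∀ i, (P.coeff i).natDegree ≤ N) (q : Polynomial D) :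
    (P.eval q).natDegree ≤ N + P.natDegree * q.natDegree := by
  rw [Polynomial.eval_eq_sum_range]
  refine Polynomial.natDegree_sum_le_of_forall_le _ _ fun i hi => ?_
  exact Polynomial.natDegree_mul_le.trans <| add_le_add (hN i) <|
    Polynomial.natDegree_pow_le.trans <|
      Nat.mul_le_mul_right _ (Finset.mem_range_succ_iff.1 hi)

theorem eval_eq_zero_of_X_pow_dvd {P : Polynomial (Polynomial D)} {g : D⟦X⟧} {q : Polynomial D}
    {M : ℕ} (hg : P.eval₂ Polynomial.coeToPowerSeries.ringHom g = 0)
    (hM : X ^ M ∣ (q : D⟦X⟧) - g) (hq : (P.eval q).natDegree < M) : P.eval q = 0 := by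
  have hdvd : X ^ M ∣ ((P.eval q : Polynomial D) : D⟦X⟧) := by
    have h := Polynomial.sub_dvd_eval_sub (q : D⟦X⟧) g (P.map Polynomial.coeToPowerSeries.ringHom)
    rw [Polynomial.eval_map, Polynomial.eval_map, hg, sub_zero] at h
    exact (hM.trans h).trans (Polynomial.eval₂_at_apply Polynomial.coeToPowerSeries.ringHom q).dvd
  ext m
  rcases lt_or_ge m M with hm | hm
  · simpa using X_pow_dvd_iff.1 hdvd m hm
  · exact Polynomial.coeff_eq_zero_of_natDegree_lt (hq.trans_le hm)

-- Liouville's argument: for large `k`, a polynomial vanishing at `g` also vanishes at its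
-- approximation `q k`, as the value there has too small a degree to be divisible by `X ^ M k`.
theorem injective_eval₂_of_approximations [IsDomain D] {g : D⟦X⟧} (q : ℕ → Polynomial D)
    (M : ℕ → ℕ) (hinj : Function.Injective q) (hdvd : ∀ k, X ^ M k ∣ (q k : D⟦X⟧) - g)
    (hdeg : ∀ c d, ∃ k₀, ∀ k ≥ k₀, c + d * (q k).natDegree < M k) :
    Function.Injective (Polynomial.eval₂RingHom Polynomial.coeToPowerSeries.ringHom g) := by
  refine (injective_iff_map_eq_zero _).2 fun P hP => ?_
  let N := P.support.sup fun i => (P.coeff i).natDegree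
  have hN (i : ℕ) : (P.coeff i).natDegree ≤ N := by
    by_cases hi : i ∈ P.support
    · exact Finset.le_sup (f := fun i => (P.coeff i).natDegree) hi
    · simp [Polynomial.notMem_support_iff.1 hi]
  obtain ⟨k₀, hk₀⟩ := hdeg N P.natDegree
  refine Polynomial.eq_zero_of_infinite_isRoot P
    (((Set.Ici_infinite k₀).image hinj.injOn).mono ?_)
  rintro _ ⟨k, hk, rfl⟩
  exact eval_eq_zero_of_X_pow_dvd hP (hdvd k) ((natDegree_eval_le hN _).trans_lt (hk₀ k hk))

theorem exists_injective_polynomial_polynomial_powerSeries (D : Type*) [CommRing D] [IsDomain D] :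
    ∃ ψ : Polynomial (Polynomial D) →+* D⟦X⟧, Function.Injective ψ := by
  let s (k : ℕ) : ℕ := (k + 1).factorial
  have hs : StrictMono s := strictMono_nat_of_lt_succ fun k =>
    (Nat.factorial_lt k.succ_pos).2 (Nat.lt_succ_self _)
  let g : D⟦X⟧ := mk (Set.indicator (Set.range s) 1)
  let q (k : ℕ) : Polynomial D := trunc (s k + 1) g
  have hq_coeff (k l : ℕ) : (q k).coeff (s l) = if l ≤ k then 1 else 0 := by
    simp [q, g, coeff_trunc, hs.le_iff_le]
  have hinj : Function.Injective q := fun k l hkl => by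
    have h₁ : l ≤ k := by simpa [hq_coeff] using congrArg (Polynomial.coeff · (s l)) hkl
    have h₂ : k ≤ l := by simpa [hq_coeff] using congrArg (Polynomial.coeff · (s k)) hkl
    exact le_antisymm h₂ h₁
  have hdvd (k : ℕ) : X ^ s (k + 1) ∣ (q k : D⟦X⟧) - g := X_pow_dvd_iff.2 fun m hm => by
    rw [map_sub, Polynomial.coeff_coe, coeff_trunc, sub_eq_zero, ite_eq_left_iff, coeff_mk]
    intro hkm
    refine (Set.indicator_of_notMem ?_ _).symm
    rintro ⟨l, rfl⟩
    have hkl : k < l := hs.lt_iff_lt.1 (by omega)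
    have hlk : l < k + 1 := hs.lt_iff_lt.1 hm
    omega
  refine ⟨_, injective_eval₂_of_approximations q _ hinj hdvd fun c d => ⟨c + d, fun k hk => ?_⟩⟩
  calc c + d * (q k).natDegree ≤ c * s k + d * s k :=
        add_le_add (Nat.le_mul_of_pos_right c (Nat.factorial_pos _))
          (Nat.mul_le_mul_left d (Nat.lt_succ_iff.1 (natDegree_trunc_lt g _)))
    _ = (c + d) * s k := (add_mul _ _ _).symm
    _ < (k + 2) * s k := Nat.mul_lt_mul_of_pos_right (by omega) (Nat.factorial_pos _)

theorem exists_injective_powerSeries_three_two (D : Type*) [CommRing D] [IsDomain D] :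
    ∃ ψ : D⟦X⟧⟦X⟧⟦X⟧ →+* D⟦X⟧⟦X⟧, Function.Injective ψ := by
  obtain ⟨f, hf⟩ := exists_injective_powerSeries_powerSeries_polynomial D
  obtain ⟨g, hg⟩ := exists_injective_powerSeries_powerSeries_polynomial (Polynomial D)
  obtain ⟨h, hh⟩ := exists_injective_polynomial_polynomial_powerSeries D
  exact ⟨(PowerSeries.map h).comp (g.comp (PowerSeries.map f)),
    (map_injective h hh).comp (hg.comp (map_injective f hf))⟩

end VariableReduction

section FractionFields

open Polynomial

variable {A K L : Type*} [CommRing A] [Field K] [Algebra A K] [IsFractionRing A K]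
  [Field L] [Algebra K L]

theorem exists_adjoin_eq_top_and_map_eq_minpoly [IsDomain A] [FiniteDimensional K L]
    [Algebra.IsSeparable K L] :
    ∃ (θ : L) (F : A[X]), Algebra.adjoin K {θ} = ⊤ ∧ F.Monic ∧
      F.map (algebraMap A K) = minpoly K θ := by
  obtain ⟨α, hα⟩ := Field.exists_primitive_element K L
  have hint : IsIntegral K α := .of_finite K α
  have htop : Algebra.adjoin K {α} = ⊤ := by
    rw [← IntermediateField.adjoin_simple_toSubalgebra_of_isAlgebraic hint.isAlgebraic, hα,
      IntermediateField.top_toSubalgebra]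
  obtain ⟨F, hF, -, hmonic⟩ := lifts_and_natDegree_eq_and_monic
    (IsLocalization.scaleRoots_commonDenom_mem_lifts (nonZeroDivisors A) (minpoly K α)
      ⟨1, by simp [(minpoly.monic hint).leadingCoeff]⟩)
    ((monic_scaleRoots_iff _).2 (minpoly.monic hint))
  set b := IsLocalization.commonDenom (nonZeroDivisors A) (minpoly K α).support (minpoly K α).coeff
  have hb : algebraMap A K b ≠ 0 := IsFractionRing.to_map_ne_zero_of_mem_nonZeroDivisors b.2
  refine ⟨algebraMap A K b • α, F, ?_, hmonic, ?_⟩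
  · rw [eq_top_iff, ← htop, Algebra.adjoin_le_iff, Set.singleton_subset_iff]
    have hmem := Subalgebra.smul_mem _ (Algebra.subset_adjoin (R := K)
      (Set.mem_singleton (algebraMap A K b • α))) (algebraMap A K b)⁻¹
    rwa [inv_smul_smul₀ hb] at hmem
  · rw [hF, IsIntegrallyClosed.minpoly_smul hb hint]

theorem exists_mul_add_mul_eq_C_of_isCoprime_map [IsDomain A] {f g : A[X]}
    (h : IsCoprime (f.map (algebraMap A K)) (g.map (algebraMap A K))) :
    ∃ (U V : A[X]) (δ : A), δ ≠ 0 ∧ U * f + V * g = C δ := by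
  obtain ⟨U, V, hUV⟩ := h
  obtain ⟨u, hu, hU⟩ := IsLocalization.integerNormalization_spec (nonZeroDivisors A) U
  obtain ⟨v, hv, hV⟩ := IsLocalization.integerNormalization_spec (nonZeroDivisors A) V
  refine ⟨C v * IsLocalization.integerNormalization (nonZeroDivisors A) U,
    C u * IsLocalization.integerNormalization (nonZeroDivisors A) V, u * v,
    nonZeroDivisors.ne_zero (mul_mem hu hv),
    map_injective (algebraMap A K) (IsFractionRing.injective A K) ?_⟩
  rw [← algebraMap_smul K, smul_eq_C_mul] at hU hV
  simp only [Polynomial.map_add, Polynomial.map_mul, map_C, hU, hV, map_mul]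
  linear_combination C (algebraMap A K u) * C (algebraMap A K v) * hUV

variable [Algebra A L] [IsScalarTower A K L]

theorem exists_smul_mem_adjoin_singleton {θ : L} (hθ : Algebra.adjoin K {θ} = ⊤)
    (x : L) :
    ∃ a ∈ nonZeroDivisors A, a • x ∈ Algebra.adjoin A {θ} := by
  obtain ⟨f, rfl⟩ : ∃ f : K[X], aeval θ f = x := by
    have hx : x ∈ Algebra.adjoin K {θ} := hθ ▸ Algebra.mem_top
    rwa [Algebra.adjoin_singleton_eq_range_aeval] at hx
  obtain ⟨a, ha, hf⟩ := IsLocalization.integerNormalization_spec (nonZeroDivisors A) f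
  refine ⟨a, ha, Algebra.adjoin_singleton_eq_range_aeval A θ ▸
    ⟨IsLocalization.integerNormalization (nonZeroDivisors A) f, ?_⟩⟩
  change aeval θ _ = _
  rw [← aeval_map_algebraMap K, hf, ← algebraMap_smul K, map_smul, algebraMap_smul]

theorem exists_smul_algebraMap_mem_adjoin_singleton [IsDomain A] {θ : L}
    (hθ : Algebra.adjoin K {θ} = ⊤) (R : Type*) [CommRing R] [Algebra A R] [Module.Finite A R]
    [Algebra R L] [IsScalarTower A R L] :
    ∃ c : A, c ≠ 0 ∧ ∀ r : R, c • algebraMap R L r ∈ Algebra.adjoin A {θ} := by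
  let W := (Subalgebra.toSubmodule (Algebra.adjoin A {θ})).comap
    (IsScalarTower.toAlgHom A R L).toLinearMap
  have htors : Module.IsTorsion A (R ⧸ W) := fun {q} => by
    obtain ⟨r, rfl⟩ := W.mkQ_surjective q
    obtain ⟨a, ha, hr⟩ := exists_smul_mem_adjoin_singleton (A := A) hθ (algebraMap R L r)
    refine ⟨⟨a, ha⟩, ?_⟩
    rw [Submonoid.smul_def, ← map_smul]
    refine (Submodule.Quotient.mk_eq_zero W).2 ?_
    simpa [W] using hr
  obtain ⟨c, hc, hc0⟩ := Submodule.annihilator_top_inter_nonZeroDivisors htors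
  refine ⟨c, nonZeroDivisors.ne_zero hc0, fun r => ?_⟩
  have hr := Submodule.mem_annihilator.1 hc (W.mkQ r) trivial
  rw [← map_smul] at hr
  simpa [W] using (Submodule.Quotient.mk_eq_zero W).1 hr

theorem exists_ringHom_of_eval₂_eq_zero {θ : L} (hθ : Algebra.adjoin K {θ} = ⊤)
    {F : A[X]} (hF : F.map (algebraMap A K) = minpoly K θ) (hint : IsIntegral K θ)
    {N : Type*} [Field N] {ε : A →+* N} (hε : Function.Injective ε) {y : N}
    (hy : F.eval₂ ε y = 0) :
    ∃ Ψ : L →+* N, Ψ.comp (algebraMap A L) = ε ∧ Ψ θ = y := by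
  let : Algebra K N := (IsFractionRing.lift hε : K →+* N).toAlgebra
  have hlift : (algebraMap K N).comp (algebraMap A K) = ε :=
    RingHom.ext (IsFractionRing.lift_algebraMap hε)
  let pb := PowerBasis.ofAdjoinEqTop hint hθ
  have hroot : aeval y (minpoly K pb.gen) = 0 := by
    rw [PowerBasis.ofAdjoinEqTop_gen, ← hF, aeval_def, eval₂_map, hlift, hy]
  refine ⟨(pb.lift y hroot : L →+* N), RingHom.ext fun a => ?_, pb.lift_gen y hroot⟩
  simp [IsScalarTower.algebraMap_apply A K L, ← hlift]

end FractionFields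

theorem exists_comp_eq_of_range_le {R S T : Type*} [CommRing R] [CommRing S] [CommRing T]
    {f : S →+* T} (hf : Function.Injective f) {g : R →+* T} (h : g.range ≤ f.range) :
    ∃ k : R →+* S, f.comp k = g := by
  let e := RingEquiv.ofBijective f.rangeRestrict
    ⟨fun _ _ h => hf (congrArg Subtype.val h), f.rangeRestrict_surjective⟩
  refine ⟨(e.symm : f.range →+* S).comp ((Subring.inclusion h).comp g.rangeRestrict),
    RingHom.ext fun r => ?_⟩
  exact congrArg Subtype.val (e.apply_symm_apply (Subring.inclusion h (g.rangeRestrict r)))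

section Specialization

open Polynomial

theorem exists_ringHom_of_isUnit {A K L : Type*} [CommRing A] [Field K] [Algebra A K]
    [IsFractionRing A K] [Field L] [Algebra K L] [Algebra A L] [IsScalarTower A K L]
    {θ : L} (hθ : Algebra.adjoin K {θ} = ⊤) {F : A[X]} (hF : F.map (algebraMap A K) = minpoly K θ)
    (hint : IsIntegral K θ) {R : Type*} [CommRing R] [Algebra A R] [Algebra R L]
    [IsScalarTower A R L] {Δ : A} (hΔ : ∀ r : R, Δ • algebraMap R L r ∈ Algebra.adjoin A {θ})
    {P : Type*} [CommRing P] [IsDomain P] {ε : A →+* P} (hε : Function.Injective ε)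
    (hunit : IsUnit (ε Δ)) {y : P} (hy : F.eval₂ ε y = 0) :
    ∃ Ψ : R →+* P, Ψ.comp (algebraMap A R) = ε ∧
      ∀ r, ε Δ * Ψ r ∈ (eval₂RingHom ε y).range := by
  let N := FractionRing P
  have hN : Function.Injective (algebraMap P N) := IsFractionRing.injective P N
  obtain ⟨Φ, hΦ, hΦθ⟩ := exists_ringHom_of_eval₂_eq_zero hθ hF hint
    (ε := (algebraMap P N).comp ε) (hN.comp hε) (y := algebraMap P N y)
    (by rw [← hom_eval₂, hy, map_zero])
  have hΦa (a : A) : Φ (algebraMap A L a) = algebraMap P N (ε a) := RingHom.congr_fun hΦ a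
  have hadjoin (l : L) (hl : l ∈ Algebra.adjoin A {θ}) :
      ∃ g : A[X], algebraMap P N (g.eval₂ ε y) = Φ l := by
    rw [Algebra.adjoin_singleton_eq_range_aeval] at hl
    obtain ⟨g, rfl⟩ := hl
    refine ⟨g, ?_⟩
    change _ = Φ (aeval θ g)
    rw [hom_eval₂, aeval_def, hom_eval₂, hΦ, hΦθ]
  have hmul (r : R) :
      ∃ g : A[X], algebraMap P N (g.eval₂ ε y) = algebraMap P N (ε Δ) * Φ (algebraMap R L r) := by
    obtain ⟨g, hg⟩ := hadjoin _ (hΔ r)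
    exact ⟨g, by rw [hg, Algebra.smul_def, map_mul, hΦa]⟩
  obtain ⟨Ψ, hΨ⟩ := exists_comp_eq_of_range_le hN (g := Φ.comp (algebraMap R L)) <| by
    rintro _ ⟨r, rfl⟩
    obtain ⟨g, hg⟩ := hmul r
    refine ⟨↑hunit.unit⁻¹ * g.eval₂ ε y, ?_⟩
    rw [map_mul, hg, ← mul_assoc, ← map_mul, hunit.val_inv_mul, map_one, one_mul,
      RingHom.comp_apply]
  have hΨr (r : R) : algebraMap P N (Ψ r) = Φ (algebraMap R L r) := RingHom.congr_fun hΨ r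
  refine ⟨Ψ, RingHom.ext fun a => hN ?_, fun r => ?_⟩
  · rw [RingHom.comp_apply, hΨr, ← IsScalarTower.algebraMap_apply, hΦa]
  · obtain ⟨g, hg⟩ := hmul r
    exact ⟨g, hN (by rw [map_mul, hΨr, ← hg, coe_eval₂RingHom])⟩

theorem exists_polynomial_forall_root_exists_ringHom (A R : Type*) [CommRing A] [IsDomain A]
    [CharZero A] [CommRing R] [IsDomain R] [Algebra A R] [FaithfulSMul A R] [Module.Finite A R] :
    ∃ (F U V : A[X]) (Δ : A), F.Monic ∧ F.natDegree ≠ 0 ∧ Δ ≠ 0 ∧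
      U * F + V * derivative F = C Δ ∧
      ∀ (P : Type w) [CommRing P] [IsDomain P] (ε : A →+* P) (y : P), Function.Injective ε →
        IsUnit (ε Δ) → F.eval₂ ε y = 0 →
        ∃ Ψ : R →+* P, Ψ.comp (algebraMap A R) = ε ∧
          ∀ r, ε Δ * Ψ r ∈ (eval₂RingHom ε y).range := by
  let K := FractionRing A
  let L := FractionRing R
  let : Algebra K L := FractionRing.liftAlgebra A L
  have : IsScalarTower A K L := FractionRing.isScalarTower_liftAlgebra A L
  have : IsLocalization (Algebra.algebraMapSubmonoid R (nonZeroDivisors A)) L :=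
    Algebra.IsAlgebraic.instIsLocalizationAlgebraMapSubmonoidNonZeroDivisors A R L
  have : FiniteDimensional K L := Module.Finite.of_isLocalization A R (nonZeroDivisors A)
  have : CharZero K := charZero_of_injective_algebraMap (IsFractionRing.injective A K)
  obtain ⟨θ, F, hθ, hmonic, hF⟩ :=
    exists_adjoin_eq_top_and_map_eq_minpoly (A := A) (K := K) (L := L)
  have hint : IsIntegral K θ := .of_finite K θ
  have hsep : (F.map (algebraMap A K)).Separable := hF ▸ (minpoly.irreducible hint).separable
  rw [Polynomial.Separable, derivative_map] at hsep
  obtain ⟨U, V, δ, hδ, hUV⟩ := exists_mul_add_mul_eq_C_of_isCoprime_map hsep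
  obtain ⟨c, hc, hcR⟩ := exists_smul_algebraMap_mem_adjoin_singleton (A := A) hθ R
  refine ⟨F, C c * U, C c * V, c * δ, hmonic, ?_, mul_ne_zero hc hδ, ?_, ?_⟩
  · rw [← hmonic.natDegree_map (algebraMap A K), hF]
    exact (minpoly.natDegree_pos hint).ne'
  · rw [C_mul]
    linear_combination C c * hUV
  · intro P _ _ ε y hε hunit hy
    refine exists_ringHom_of_isUnit hθ hF hint (fun r => ?_) hε hunit hy
    rw [mul_comm, mul_smul]
    exact Subalgebra.smul_mem _ (hcR r) δ

end Specialization

section FiniteExtensionOfPowerSeries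

open PowerSeries

theorem injective_of_comp_algebraMap {A R P : Type*} [CommRing A] [CommRing R] [CommRing P]
    [Nontrivial A] [IsDomain R] [Algebra A R] [Algebra.IsIntegral A R] {Ψ : R →+* P}
    (h : Function.Injective (Ψ.comp (algebraMap A R))) : Function.Injective Ψ :=
  (RingHom.injective_iff_ker_eq_bot _).2 <| Ideal.eq_bot_of_comap_eq_bot (R := A) <| by
    rw [RingHom.comap_ker, (RingHom.injective_iff_ker_eq_bot _).1 h]

-- Translating makes the constant coefficient of `f` nonzero; rescaling by its square then brings
-- every series close enough to its constant coefficient for Newton's method.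
theorem exists_injective_endomorphism_congr_constantCoeff {B : Type*} [CommRing B] [IsDomain B]
    {I : Ideal B} [IsAdicComplete I B] (hI : I ≠ ⊥) {f : B⟦X⟧} (hf : f ≠ 0) :
    ∃ ε : B⟦X⟧ →+* B⟦X⟧, Function.Injective ε ∧ constantCoeff (ε f) ≠ 0 ∧
      ∀ g, C (constantCoeff (ε f)) ^ 2 * X ∣ ε g - C (constantCoeff (ε g)) := by
  obtain ⟨τ, hτ, -, hτf⟩ := exists_injective_translation_constantCoeff_ne_zero hI hf
  set e := constantCoeff (τ f) ^ 2
  have hconst (g : B⟦X⟧) : constantCoeff (rescale e (τ g)) = constantCoeff (τ g) := by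
    rw [← coeff_zero_eq_constantCoeff_apply, coeff_rescale, pow_zero, one_mul,
      coeff_zero_eq_constantCoeff_apply]
  refine ⟨(rescale e).comp τ, (rescale_injective (pow_ne_zero 2 hτf)).comp hτ, ?_, fun g => ?_⟩ <;>
    simp only [RingHom.comp_apply, hconst]
  · exact hτf
  · rw [← map_pow]
    exact C_mul_X_dvd_rescale_sub e (τ g)

theorem dvd_eval₂_sub_C {A O : Type*} [CommRing A] [CommRing O] {ε : A →+* O⟦X⟧} {d : O⟦X⟧}
    (h : ∀ a, d ∣ ε a - C (constantCoeff (ε a))) (G : Polynomial A) (t : O) :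
    d ∣ G.eval₂ ε (C t) - C (G.eval₂ (constantCoeff.comp ε) t) := by
  have hcomp : (Ideal.Quotient.mk (Ideal.span {d})).comp ε =
      (Ideal.Quotient.mk (Ideal.span {d})).comp (C.comp (constantCoeff.comp ε)) :=
    RingHom.ext fun a => Ideal.Quotient.eq.2 (Ideal.mem_span_singleton.2 (h a))
  rw [← Ideal.mem_span_singleton, ← Ideal.Quotient.eq]
  simp only [Polynomial.hom_eval₂, hcomp]

theorem exists_eval₂_eq_zero_of_eval₂_constantCoeff {A O : Type*} [CommRing A] [CommRing O]
    {F U V : Polynomial A} {Δ : A} (hUV : U * F + V * F.derivative = Polynomial.C Δ)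
    {ε : A →+* O⟦X⟧}
    (hε : ∀ a, C (constantCoeff (ε Δ)) ^ 2 * X ∣ ε a - C (constantCoeff (ε a)))
    {t : O} (ht : F.eval₂ (constantCoeff.comp ε) t = 0) :
    ∃ y : O⟦X⟧, F.eval₂ ε y = 0 := by
  have hbezout := congrArg (Polynomial.eval₂ (constantCoeff.comp ε) t) hUV
  simp only [Polynomial.eval₂_add, Polynomial.eval₂_mul, Polynomial.eval₂_C, ht, mul_zero, zero_add]
    at hbezout
  set d := F.derivative.eval₂ (constantCoeff.comp ε) t
  set v := V.eval₂ (constantCoeff.comp ε) t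
  have hd : C (constantCoeff (ε Δ)) = (C v * C d : O⟦X⟧) := by rw [← map_mul, hbezout]; rfl
  obtain ⟨a, ha⟩ := dvd_eval₂_sub_C hε F t
  obtain ⟨b, hb⟩ := dvd_eval₂_sub_C hε F.derivative t
  rw [ht, map_zero, sub_zero, hd] at ha
  rw [hd] at hb
  have hX : (X : O⟦X⟧) ∈ Ideal.span {X} := Ideal.mem_span_singleton_self X
  obtain ⟨y, -, hy⟩ := exists_isRoot_of_eval_eq_sq_mul (F := F.map ε) (θ := C t) (d := C d)
    (Ideal.mul_mem_left _ (C v ^ 2 * a) hX) (Ideal.mul_mem_left _ (C v ^ 2 * C d * b) hX)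
    (by rw [Polynomial.eval_map, ha]; ring)
    (by rw [Polynomial.derivative_map, Polynomial.eval_map]; linear_combination hb)
  exact ⟨y, by rwa [← Polynomial.eval_map]⟩

-- Rescaling by `d` multiplies the `n`-th coefficient by `d ^ n`, which clears the denominator `d`
-- for all `n ≥ 1`.
theorem exists_injective_powerSeries_of_mul_coeff_mem {R Λ S : Type*} [CommRing R] [CommRing Λ]
    [IsDomain Λ] [SetLike S Λ] [SubringClass S Λ] {O : S} {Ψ : R →+* Λ⟦X⟧}
    (hΨ : Function.Injective Ψ) {d : Λ} (hdO : d ∈ O) (hd : d ≠ 0)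
    (h0 : ∀ r, constantCoeff (Ψ r) ∈ O) (hn : ∀ r n, d * coeff n (Ψ r) ∈ O) :
    ∃ f : R →+* O⟦X⟧, Function.Injective f := by
  obtain ⟨f, hf⟩ := exists_comp_eq_of_range_le (g := (rescale d).comp Ψ)
    (PowerSeries.map_injective (SubringClass.subtype O) Subtype.val_injective) <| by
      rintro _ ⟨r, rfl⟩
      have hmem : ∀ n, d ^ n * coeff n (Ψ r) ∈ O
        | 0 => by simpa using h0 r
        | n + 1 => by simpa only [pow_succ, mul_assoc] using mul_mem (pow_mem hdO n) (hn r (n + 1))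
      refine ⟨mk fun n => ⟨_, hmem n⟩, PowerSeries.ext fun n => ?_⟩
      simp [coeff_rescale]
  refine ⟨f, .of_comp (f := PowerSeries.map (SubringClass.subtype O)) ?_⟩
  rw [← RingHom.coe_comp, hf]
  exact (rescale_injective hd).comp hΨ

theorem exists_finite_subalgebra_forall_map_mem {A B Λ R : Type*} [CommRing A] [CommRing B]
    [CommRing Λ] [Algebra B Λ] [CommRing R] [Algebra A R] [Module.Finite A R]
    {φ : A →+* B} {Ψ : R →+* Λ} (h : Ψ.comp (algebraMap A R) = (algebraMap B Λ).comp φ)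
    {t : Λ} (ht : IsIntegral B t) :
    ∃ O : Subalgebra B Λ, Module.Finite B O ∧ t ∈ O ∧ ∀ r, Ψ r ∈ O := by
  obtain ⟨s, hs⟩ := Module.Finite.fg_top (R := A) (M := R)
  refine ⟨Algebra.adjoin B (insert t (Ψ '' s)), ?_, Algebra.subset_adjoin (.inl rfl), fun r => ?_⟩
  · refine Module.Finite.iff_fg.2 (fg_adjoin_of_finite ((s.finite_toSet.image Ψ).insert t) ?_)
    rintro _ (rfl | ⟨r, -, rfl⟩)
    · exact ht
    · exact (Algebra.IsIntegral.isIntegral (R := A) r).map_of_comp_eq φ Ψ h.symm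
  · have hr : r ∈ Submodule.span A (s : Set R) := hs ▸ Submodule.mem_top
    induction hr using Submodule.span_induction with
    | mem x hx => exact Algebra.subset_adjoin (.inr ⟨x, hx, rfl⟩)
    | zero => simp
    | add x y _ _ hx hy => rw [map_add]; exact add_mem hx hy
    | smul a x _ hx =>
      rw [Algebra.smul_def, map_mul, ← RingHom.comp_apply, h]
      exact mul_mem (Subalgebra.algebraMap_mem _ _) hx

theorem constantCoeff_comp_map {B O : Type*} [CommRing B] [CommRing O] (f : B →+* O) :
    constantCoeff.comp (map f) = f.comp constantCoeff :=
  RingHom.ext fun g => by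
    simp only [RingHom.comp_apply, ← coeff_zero_eq_constantCoeff_apply, coeff_map]

theorem exists_eval₂_map_eq_zero_of_aeval_constantCoeff {A B O : Type*} [CommRing A] [CommRing B]
    [CommRing O] [Algebra B O] {F U V : Polynomial A} {Δ : A}
    (hUV : U * F + V * F.derivative = Polynomial.C Δ) {ε : A →+* B⟦X⟧}
    (hε : ∀ a, C (constantCoeff (ε Δ)) ^ 2 * X ∣ ε a - C (constantCoeff (ε a)))
    {t : O} (ht : Polynomial.aeval t (F.map (constantCoeff.comp ε)) = 0) :
    ∃ y : O⟦X⟧, F.eval₂ ((map (algebraMap B O)).comp ε) y = 0 := by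
  have hconst (g : B⟦X⟧) : constantCoeff (map (algebraMap B O) g) =
      algebraMap B O (constantCoeff g) := RingHom.congr_fun (constantCoeff_comp_map _) g
  refine exists_eval₂_eq_zero_of_eval₂_constantCoeff hUV (fun a => ?_) (t := t) ?_
  · simpa [hconst] using map_dvd (map (algebraMap B O)) (hε a)
  · rwa [← RingHom.comp_assoc, constantCoeff_comp_map, RingHom.comp_assoc, ← Polynomial.eval₂_map]

theorem isUnit_map_of_constantCoeff_ne_zero {B Λ : Type*} [CommRing B] [Field Λ] {f : B →+* Λ}
    (hf : Function.Injective f) {g : B⟦X⟧} (hg : constantCoeff g ≠ 0) : IsUnit (map f g) := by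
  rw [isUnit_iff_constantCoeff, ← RingHom.comp_apply, constantCoeff_comp_map]
  exact isUnit_iff_ne_zero.2 ((map_ne_zero_iff f hf).2 hg)

theorem map_algebraMap_eq_comp (B O Λ : Type*) [CommRing B] [CommRing O] [CommRing Λ] [Algebra B O]
    [Algebra O Λ] [Algebra B Λ] [IsScalarTower B O Λ] :
    map (algebraMap B Λ) = (map (algebraMap O Λ)).comp (map (algebraMap B O)) := by
  rw [← map_comp, ← IsScalarTower.algebraMap_eq]

theorem dvd_C_of_C_mul_X_dvd_sub {B : Type*} [CommRing B] {a : B} {h : B⟦X⟧}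
    (hh : C a * X ∣ h - C a) : h ∣ C a := by
  obtain ⟨q, hq⟩ := hh
  have hunit : IsUnit (1 + X * q) := isUnit_iff_constantCoeff.2 (by simp)
  have hfac : h = C a * (1 + X * q) := by linear_combination hq
  rw [hfac, hunit.mul_right_dvd]

theorem mul_coeff_mem_of_mul_mem_range_eval₂RingHom {A B Λ : Type*} [CommRing A] [CommRing B]
    [CommRing Λ] [Algebra B Λ] {O : Subalgebra B Λ} {ε : A →+* B⟦X⟧} {y : O⟦X⟧} {Δ : A} {d : B}
    (hd : ε Δ ∣ C d) {z : Λ⟦X⟧}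
    (hz : map (algebraMap B Λ) (ε Δ) * z ∈ (Polynomial.eval₂RingHom
      ((map (algebraMap B Λ)).comp ε) (map (algebraMap O Λ) y)).range) (n : ℕ) :
    algebraMap B Λ d * coeff n z ∈ O := by
  obtain ⟨w, hw⟩ := hd
  obtain ⟨g, hg⟩ := hz
  have hmap := map_algebraMap_eq_comp B O Λ
  have hcoeff : C (algebraMap B Λ d) * z = map (algebraMap O Λ)
      (map (algebraMap B O) w * g.eval₂ ((map (algebraMap B O)).comp ε) y) := by
    rw [map_mul, Polynomial.hom_eval₂, ← RingHom.comp_assoc, ← hmap, ← RingHom.comp_apply (map _),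
      ← hmap, ← Polynomial.coe_eval₂RingHom, hg, ← map_C, hw, map_mul]
    ring
  rw [← coeff_C_mul, hcoeff, coeff_map]
  exact Subtype.prop _

theorem exists_finite_subalgebra_injective_powerSeries (B : Type v) [CommRing B] [IsDomain B]
    [CharZero B] {I : Ideal B} [IsAdicComplete I B] (hI : I ≠ ⊥) (R : Type*) [CommRing R]
    [IsDomain R] [Algebra B⟦X⟧ R] [FaithfulSMul B⟦X⟧ R] [Module.Finite B⟦X⟧ R] :
    ∃ (O : Subalgebra B (AlgebraicClosure (FractionRing B))) (_ : Module.Finite B O)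
      (f : R →+* O⟦X⟧), Function.Injective f := by
  let Λ := AlgebraicClosure (FractionRing B)
  have : FaithfulSMul B Λ := .trans B (FractionRing B) Λ
  have hB : Function.Injective (algebraMap B Λ) := FaithfulSMul.algebraMap_injective B Λ
  have : CharZero B⟦X⟧ := charZero_of_injective_ringHom (C_injective (R := B))
  obtain ⟨F, U, V, Δ, hF, hFdeg, hΔ, hUV, hlift⟩ :=
    exists_polynomial_forall_root_exists_ringHom.{v} B⟦X⟧ R
  obtain ⟨ε, hε, hΔ0, hcongr⟩ := exists_injective_endomorphism_congr_constantCoeff hI hΔ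
  obtain ⟨θ, hθ⟩ := IsAlgClosed.exists_aeval_eq_zero_of_injective Λ hB
    (F.map (constantCoeff.comp ε))
    (Polynomial.degree_ne_of_natDegree_ne (by rwa [hF.natDegree_map]))
  let R₀ := Algebra.adjoin B {θ}
  have hθint : IsIntegral B θ := ⟨_, hF.map _, hθ⟩
  obtain ⟨y, hy⟩ := exists_eval₂_map_eq_zero_of_aeval_constantCoeff (O := R₀)
    (t := ⟨θ, Algebra.self_mem_adjoin_singleton B θ⟩) hUV hcongr (Subtype.val_injective <| by
      rwa [Polynomial.aeval_subalgebra_coe])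
  obtain ⟨Ψ, hΨ, hΨΔ⟩ := hlift Λ⟦X⟧ ((map (algebraMap B Λ)).comp ε) (map (algebraMap R₀ Λ) y)
    ((map_injective _ hB).comp hε) (isUnit_map_of_constantCoeff_ne_zero hB hΔ0) (by
      rw [map_algebraMap_eq_comp B R₀ Λ, RingHom.comp_assoc, ← Polynomial.hom_eval₂, hy, map_zero])
  have hΨinj : Function.Injective Ψ :=
    injective_of_comp_algebraMap (A := B⟦X⟧) (hΨ ▸ (map_injective _ hB).comp hε)
  have hdvd : ε Δ ∣ C (constantCoeff (ε Δ)) := dvd_C_of_C_mul_X_dvd_sub <|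
    (mul_dvd_mul_right (dvd_pow_self _ two_ne_zero) X).trans (hcongr Δ)
  obtain ⟨O, hO, hθO, hΨO⟩ := exists_finite_subalgebra_forall_map_mem (A := B⟦X⟧)
    (φ := constantCoeff.comp ε) (Ψ := constantCoeff.comp Ψ) (by
      rw [RingHom.comp_assoc, hΨ, ← RingHom.comp_assoc, constantCoeff_comp_map,
        RingHom.comp_assoc]) hθint
  refine ⟨O, hO, exists_injective_powerSeries_of_mul_coeff_mem hΨinj
    (O.algebraMap_mem _) ((map_ne_zero_iff _ hB).2 hΔ0) hΨO fun r n => ?_⟩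
  exact Algebra.adjoin_le (Set.singleton_subset_iff.2 hθO)
    (mul_coeff_mem_of_mul_mem_range_eval₂RingHom hdvd (hΨΔ r) n)

end FiniteExtensionOfPowerSeries

section IteratedPowerSeries

open PowerSeries IsLocalRing

theorem maximalIdeal_powerSeries_eq_map_sup {B : Type*} [CommRing B] [IsLocalRing B] :
    maximalIdeal B⟦X⟧ = (maximalIdeal B).map C ⊔ Ideal.span {X} := by
  rw [maximalIdeal_powerSeries_eq_comap]
  refine le_antisymm (fun f hf => ?_) (sup_le ?_ ?_)
  · rw [eq_X_mul_shift_add_const f, add_comm]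
    exact Submodule.add_mem_sup (Ideal.mem_map_of_mem C hf)
      (Ideal.mul_mem_right _ _ (Ideal.mem_span_singleton_self X))
  · rw [Ideal.map_le_iff_le_comap, Ideal.comap_comap, constantCoeff_comp_C, Ideal.comap_id]
  · simp

theorem X_mem_maximalIdeal_powerSeries {B : Type*} [CommRing B] [IsLocalRing B] :
    X ∈ maximalIdeal B⟦X⟧ := by
  rw [maximalIdeal_powerSeries_eq_comap]
  simp

theorem ringKrullDim_powerSeries (B : Type*) [CommRing B] [IsNoetherianRing B] [IsLocalRing B] :
    ringKrullDim B⟦X⟧ = ringKrullDim B + 1 := by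
  have hker : Ideal.span {(X : B⟦X⟧)} = RingHom.ker (constantCoeff (R := B)) := by
    ext f
    rw [Ideal.mem_span_singleton, X_dvd_iff, RingHom.mem_ker]
  have hreg : (X : B⟦X⟧) ∈ nonZeroDivisors B⟦X⟧ := MvPowerSeries.X_mem_nonzeroDivisors
  let e : (B⟦X⟧ ⧸ Ideal.span {(X : B⟦X⟧)}) ≃+* B := (Ideal.quotEquivOfEq hker).trans
    (RingHom.quotientKerEquivOfSurjective constantCoeff_surj)
  rw [← ringKrullDim_quotient_span_singleton_succ_eq_ringKrullDim_of_mem_nonZeroDivisors hreg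
    X_mem_maximalIdeal_powerSeries, ringKrullDim_eq_of_ringEquiv e]

/-- The power series ring `B⟦X₁⟧⋯⟦Xₙ⟧`. It is bundled, so that the recursion on `n` can carry its
ring structure along. -/
noncomputable def iteratedPowerSeries (B : Type u) [CommRing B] : ℕ → CommRingCat.{u}
  | 0 => .of B
  | n + 1 => .of (iteratedPowerSeries B n)⟦X⟧

variable (B : Type u) [CommRing B]

instance isDomain_iteratedPowerSeries [IsDomain B] : ∀ n, IsDomain (iteratedPowerSeries B n)
  | 0 => ‹IsDomain B›
  | n + 1 =>
    have := isDomain_iteratedPowerSeries n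
    inferInstanceAs (IsDomain (iteratedPowerSeries B n)⟦X⟧)

instance isNoetherianRing_iteratedPowerSeries [IsNoetherianRing B] :
    ∀ n, IsNoetherianRing (iteratedPowerSeries B n)
  | 0 => ‹IsNoetherianRing B›
  | n + 1 =>
    have := isNoetherianRing_iteratedPowerSeries n
    inferInstanceAs (IsNoetherianRing (iteratedPowerSeries B n)⟦X⟧)

instance isLocalRing_iteratedPowerSeries [IsLocalRing B] :
    ∀ n, IsLocalRing (iteratedPowerSeries B n)
  | 0 => ‹IsLocalRing B›
  | n + 1 =>
    have := isLocalRing_iteratedPowerSeries n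
    inferInstanceAs (IsLocalRing (iteratedPowerSeries B n)⟦X⟧)

instance isAdicComplete_iteratedPowerSeries [IsLocalRing B] [IsAdicComplete (maximalIdeal B) B] :
    ∀ n, IsAdicComplete (maximalIdeal (iteratedPowerSeries B n)) (iteratedPowerSeries B n)
  | 0 => ‹IsAdicComplete (maximalIdeal B) B›
  | n + 1 => by
    have := isAdicComplete_iteratedPowerSeries n
    exact maximalIdeal_powerSeries_eq_comap (B := iteratedPowerSeries B n) ▸
      isAdicComplete_comap_constantCoeff

instance charZero_iteratedPowerSeries [CharZero B] : ∀ n, CharZero (iteratedPowerSeries B n)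
  | 0 => ‹CharZero B›
  | n + 1 =>
    have := charZero_iteratedPowerSeries n
    charZero_of_injective_ringHom (C_injective (R := iteratedPowerSeries B n))

theorem ringKrullDim_iteratedPowerSeries [IsNoetherianRing B] [IsLocalRing B] (n : ℕ) :
    ringKrullDim (iteratedPowerSeries B n) = ringKrullDim B + n := by
  induction n with
  | zero => exact (add_zero _).symm
  | succ n ih =>
    rw [Nat.cast_succ, ← add_assoc, ← ih]
    exact ringKrullDim_powerSeries (iteratedPowerSeries B n)

theorem exists_injective_iteratedPowerSeries_of_le {m n : ℕ} (h : m ≤ n) :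
    ∃ f : iteratedPowerSeries B m →+* iteratedPowerSeries B n, Function.Injective f := by
  induction n, h using Nat.le_induction with
  | base => exact ⟨RingHom.id _, Function.injective_id⟩
  | succ n _ ih =>
    obtain ⟨f, hf⟩ := ih
    exact ⟨(C (R := iteratedPowerSeries B n)).comp f, C_injective.comp hf⟩

theorem exists_injective_iteratedPowerSeries [IsDomain B] (m : ℕ) {n : ℕ} (hn : 2 ≤ n) :
    ∃ f : iteratedPowerSeries B m →+* iteratedPowerSeries B n, Function.Injective f := by
  induction m with
  | zero => exact exists_injective_iteratedPowerSeries_of_le B n.zero_le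
  | succ m ih =>
    rcases le_or_gt (m + 1) n with h | h
    · exact exists_injective_iteratedPowerSeries_of_le B h
    · obtain ⟨k, rfl⟩ := Nat.exists_eq_add_of_le' (hn.trans (Nat.lt_succ_iff.1 h))
      obtain ⟨f, hf⟩ := ih
      obtain ⟨g, hg⟩ := exists_injective_powerSeries_three_two (iteratedPowerSeries B k)
      exact ⟨f.comp g, hf.comp hg⟩

end IteratedPowerSeries

section MatrixEmbeddings

/-- `R` is a subring of a matrix algebra `M_k(T)`. -/
def IsMatrixEmbeddable (R T : Type*) [Ring R] [Ring T] : Prop :=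
  ∃ (k : ℕ) (f : R →+* Matrix (Fin k) (Fin k) T), Function.Injective f

theorem IsMatrixEmbeddable.comp_injective {R R' T : Type*} [Ring R] [Ring R'] [Ring T]
    (h : IsMatrixEmbeddable R' T) {f : R →+* R'} (hf : Function.Injective f) :
    IsMatrixEmbeddable R T := by
  obtain ⟨k, g, hg⟩ := h
  exact ⟨k, g.comp f, hg.comp hf⟩

theorem IsMatrixEmbeddable.map_injective {R T T' : Type*} [Ring R] [Ring T] [Ring T']
    (h : IsMatrixEmbeddable R T) {f : T →+* T'} (hf : Function.Injective f) :
    IsMatrixEmbeddable R T' := by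
  obtain ⟨k, g, hg⟩ := h
  exact ⟨k, f.mapMatrix.comp g, (Matrix.map_injective hf).comp hg⟩

open PowerSeries in
theorem exists_injective_powerSeries_matrix (n T : Type*) [Fintype n] [DecidableEq n] [Ring T] :
    ∃ f : (Matrix n n T)⟦X⟧ →+* Matrix n n T⟦X⟧, Function.Injective f := by
  refine ⟨{ toFun := fun x => .of fun i j => .mk fun d => coeff d x i j
            map_one' := ?_
            map_mul' := fun x y => ?_
            map_zero' := by ext; simp
            map_add' := fun x y => by ext; simp }, fun x y hxy => ?_⟩
  · ext i j d
    rcases eq_or_ne i j with rfl | hij <;> rcases eq_or_ne d 0 with rfl | hd <;>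
      simp [coeff_one, *]
  · ext i j d
    simp only [Matrix.of_apply, coeff_mk, coeff_mul, map_sum, Matrix.sum_apply, Matrix.mul_apply]
    exact Finset.sum_comm
  · ext d i j
    simpa using congrArg (fun M => coeff d (M i j)) hxy

theorem IsMatrixEmbeddable.powerSeries {R T : Type*} [Ring R] [Ring T]
    (h : IsMatrixEmbeddable R T) : IsMatrixEmbeddable (PowerSeries R) (PowerSeries T) := by
  obtain ⟨k, f, hf⟩ := h
  obtain ⟨g, hg⟩ := exists_injective_powerSeries_matrix (Fin k) T
  exact ⟨k, g.comp (PowerSeries.map f), hg.comp (PowerSeries.map_injective f hf)⟩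

theorem IsMatrixEmbeddable.exists_injective_generalLinearGroup {R T : Type*} [CommRing R]
    [CommRing T] (h : IsMatrixEmbeddable R T) (n : ℕ) :
    ∃ (m : ℕ) (f : Matrix.GeneralLinearGroup (Fin n) R →* Matrix.GeneralLinearGroup (Fin m) T),
      Function.Injective f := by
  obtain ⟨k, f, hf⟩ := h
  let e : Matrix (Fin n) (Fin n) (Matrix (Fin k) (Fin k) T) ≃+*
      Matrix (Fin (n * k)) (Fin (n * k)) T :=
    (Matrix.compRingEquiv (Fin n) (Fin k) T).trans (Matrix.reindexRingEquiv T finProdFinEquiv)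
  let F : Matrix (Fin n) (Fin n) R →+* Matrix (Fin (n * k)) (Fin (n * k)) T :=
    e.toRingHom.comp f.mapMatrix
  exact ⟨n * k, Units.map F, Units.map_injective (e.injective.comp (Matrix.map_injective hf))⟩

/-- Every domain containing the ring `B` and finite over it is a subring of a matrix algebra over
`B`. The universe `w` is that of the extensions considered. -/
def HasMatrixEmbeddings (B : Type v) [CommRing B] : Prop :=
  ∀ (R : Type w) [CommRing R] [IsDomain R] [Algebra B R] [FaithfulSMul B R] [Module.Finite B R],
    IsMatrixEmbeddable R B

theorem hasMatrixEmbeddings_of_isPrincipalIdealRing (B : Type v) [CommRing B] [IsDomain B]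
    [IsPrincipalIdealRing B] : HasMatrixEmbeddings.{v, w} B := by
  intro R _ _ _ _ _
  have : Module.Free B R := Module.free_of_finite_type_torsion_free'
  let b := Module.finBasis B R
  exact ⟨_, (Algebra.leftMulMatrix b).toRingHom, Algebra.leftMulMatrix_injective b⟩

theorem HasMatrixEmbeddings.powerSeries {B : Type v} [CommRing B] [IsDomain B] [CharZero B]
    {I : Ideal B} [IsAdicComplete I B] (hI : I ≠ ⊥) (hB : HasMatrixEmbeddings.{v, v} B) :
    HasMatrixEmbeddings.{v, w} (PowerSeries B) := by
  intro R _ _ _ _ _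
  obtain ⟨O, _, f, hf⟩ := exists_finite_subalgebra_injective_powerSeries B hI R
  have : FaithfulSMul B O := by
    rw [faithfulSMul_iff_algebraMap_injective]
    refine Function.Injective.of_comp (f := O.val) ?_
    have := FaithfulSMul.trans B (FractionRing B) (AlgebraicClosure (FractionRing B))
    exact FaithfulSMul.algebraMap_injective B (AlgebraicClosure (FractionRing B))
  exact (hB O).powerSeries.comp_injective hf

open IsLocalRing in
theorem maximalIdeal_iteratedPowerSeries_ne_bot (D : Type v) [CommRing D] [IsDomain D]
    [IsDiscreteValuationRing D] : ∀ n, maximalIdeal (iteratedPowerSeries D n) ≠ ⊥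
  | 0 => IsDiscreteValuationRing.not_a_field D
  | n + 1 => by
    exact (Submodule.ne_bot_iff _).2
      ⟨_, X_mem_maximalIdeal_powerSeries (B := iteratedPowerSeries D n), PowerSeries.X_ne_zero⟩

theorem hasMatrixEmbeddings_iteratedPowerSeries (D : Type v) [CommRing D] [IsDomain D]
    [IsDiscreteValuationRing D] [CharZero D] [IsAdicComplete (IsLocalRing.maximalIdeal D) D]
    (n : ℕ) : HasMatrixEmbeddings.{v, w} (iteratedPowerSeries D n) := by
  have hv (n : ℕ) : HasMatrixEmbeddings.{v, v} (iteratedPowerSeries D n) := by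
    induction n with
    | zero => exact hasMatrixEmbeddings_of_isPrincipalIdealRing D
    | succ n ih => exact ih.powerSeries (maximalIdeal_iteratedPowerSeries_ne_bot D n)
  cases n with
  | zero => exact hasMatrixEmbeddings_of_isPrincipalIdealRing D
  | succ n => exact (hv n).powerSeries (maximalIdeal_iteratedPowerSeries_ne_bot D n)

end MatrixEmbeddings

section SystemsOfParameters

open IsLocalRing Ideal

theorem exists_list_maximalIdeal_pow_le (S : Type*) [CommRing S] [IsNoetherianRing S]
    [IsLocalRing S] : ∃ l : List S, (l.length : WithBot ℕ∞) = ringKrullDim S ∧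
      ofList l ≤ maximalIdeal S ∧ ∃ n, maximalIdeal S ^ n ≤ ofList l := by
  obtain ⟨s, hs, hcard⟩ := exists_finset_card_eq_height_of_isNoetherianRing (maximalIdeal S)
  have hspan : ofList s.toList = span (s : Set S) := by simp [ofList]
  refine ⟨s.toList, ?_, hspan ▸ hs.1.2, ?_⟩
  · rw [Finset.length_toList, ← maximalIdeal_height_eq_ringKrullDim, ← hcard]
    rfl
  · rw [hspan]
    refine exists_pow_le_of_le_radical_of_fg ?_ (IsNoetherian.noetherian _)
    rw [radical_eq_sInf]
    exact le_sInf fun J ⟨hJ, hJp⟩ => hs.2 ⟨hJp, hJ⟩ (le_maximalIdeal hJp.ne_top)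

theorem exists_list_maximalIdeal_pow_le_span_sup {S : Type*} [CommRing S] [IsNoetherianRing S]
    [IsLocalRing S] {a : S} (ha : a ∈ maximalIdeal S) (hreg : a ∈ nonZeroDivisors S) :
    ∃ l : List S, (l.length + 1 : WithBot ℕ∞) = ringKrullDim S ∧
      ofList l ≤ maximalIdeal S ∧ ∃ n, maximalIdeal S ^ n ≤ span {a} ⊔ ofList l := by
  set π := Ideal.Quotient.mk (span {a})
  have hπ : Function.Surjective π := Ideal.Quotient.mk_surjective
  have : Nontrivial (S ⧸ span {a}) := Ideal.Quotient.nontrivial_iff.2 <|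
    ne_top_of_le_ne_top IsPrime.ne_top' ((span_singleton_le_iff_mem _).2 ha)
  have : IsLocalRing (S ⧸ span {a}) := .of_surjective' π hπ
  have : IsLocalHom π := .of_surjective π hπ
  obtain ⟨l', hdim, hle, n, hn⟩ := exists_list_maximalIdeal_pow_le (S ⧸ span {a})
  obtain ⟨l, rfl⟩ : ∃ l : List S, l.map π = l' := List.map_surjective_iff.2 hπ l'
  rw [← map_ofList] at hle hn
  refine ⟨l, ?_, ?_, n, ?_⟩
  · rw [← ringKrullDim_quotient_span_singleton_succ_eq_ringKrullDim_of_mem_nonZeroDivisors hreg ha,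
      ← hdim, List.length_map]
  · have hcomap := ((local_hom_TFAE π).out 0 4).1 ‹_›
    rwa [map_le_iff_le_comap, hcomap] at hle
  · rw [← comap_map_quotientMk, ← map_le_iff_le_comap, Ideal.map_pow]
    exact (pow_right_mono (map_maximalIdeal_le π) n).trans hn

theorem ringKrullDim_le_of_maximalIdeal_pow_le {A S : Type*} [CommRing A] [IsNoetherianRing A]
    [IsLocalRing A] [CommRing S] [IsNoetherianRing S] [IsLocalRing S] (φ : A →+* S) [IsLocalHom φ]
    {n : ℕ} (hn : maximalIdeal S ^ n ≤ (maximalIdeal A).map φ) :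
    ringKrullDim S ≤ ringKrullDim A := by
  algebraize [φ]
  set J := (maximalIdeal A).map (algebraMap A S)
  have hheight : ((maximalIdeal S).map (Ideal.Quotient.mk J)).height = 0 := by
    have hJ : J ≤ maximalIdeal S := map_maximalIdeal_le (algebraMap A S)
    have : ((maximalIdeal S).map (Ideal.Quotient.mk J)).IsPrime :=
      map_isPrime_of_surjective Ideal.Quotient.mk_surjective (by rwa [mk_ker])
    refine height_eq_zero_iff.2 ⟨⟨this, bot_le⟩, fun Q ⟨hQ, _⟩ _ => hQ.le_of_pow_le (n := n) ?_⟩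
    rw [← Ideal.map_pow]
    exact (map_mono hn).trans (map_quotient_self J).le |>.trans bot_le
  have h := height_le_height_add_of_liesOver (maximalIdeal A) (maximalIdeal S)
  rw [hheight, add_zero] at h
  rw [← maximalIdeal_height_eq_ringKrullDim, ← maximalIdeal_height_eq_ringKrullDim]
  exact_mod_cast h

theorem injective_of_maximalIdeal_pow_le {A S : Type*} [CommRing A] [IsDomain A]
    [IsNoetherianRing A] [IsLocalRing A] [CommRing S] [IsNoetherianRing S] [IsLocalRing S]
    (φ : A →+* S) [IsLocalHom φ] {n : ℕ} (hn : maximalIdeal S ^ n ≤ (maximalIdeal A).map φ)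
    (hdim : ringKrullDim A ≤ ringKrullDim S) : Function.Injective φ := by
  by_contra hinj
  obtain ⟨f, hf, hf0⟩ : ∃ f, φ f = 0 ∧ f ≠ 0 := by
    simpa [injective_iff_map_eq_zero] using hinj
  set π := Ideal.Quotient.mk (RingHom.ker φ)
  have hπ : Function.Surjective π := Ideal.Quotient.mk_surjective
  have : Nontrivial (A ⧸ RingHom.ker φ) := φ.kerLift.domain_nontrivial
  have : IsLocalRing (A ⧸ RingHom.ker φ) := .of_surjective' π hπ
  have : IsLocalHom π := .of_surjective π hπ
  have : IsLocalHom φ.kerLift := ⟨fun x hx => by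
    obtain ⟨a, rfl⟩ := hπ x
    exact (isUnit_of_map_unit φ a hx).map π⟩
  have hle : ringKrullDim S ≤ ringKrullDim (A ⧸ RingHom.ker φ) :=
    ringKrullDim_le_of_maximalIdeal_pow_le φ.kerLift (n := n) <| hn.trans <|
      map_le_iff_le_comap.2 fun a ha => mem_map_of_mem φ.kerLift (map_nonunit π a ha)
  have hlt : ringKrullDim (A ⧸ RingHom.ker φ) + 1 ≤ ringKrullDim A :=
    ringKrullDim_succ_le_of_surjective π hπ (mem_nonZeroDivisors_of_ne_zero hf0)
      (Ideal.Quotient.eq_zero_iff_mem.2 hf)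
  have hcontra := hlt.trans (hdim.trans hle)
  rw [← maximalIdeal_height_eq_ringKrullDim] at hcontra
  exact absurd (by exact_mod_cast hcontra)
    ((ENat.lt_add_one_iff (height_ne_top IsPrime.ne_top')).2 le_rfl).not_ge

end SystemsOfParameters

section CohenStructure

open IsLocalRing Ideal

theorem exists_ringHom_iteratedPowerSeries {R D : Type*} [CommRing R] [CommRing D] [IsLocalRing D]
    (I : Ideal R) [IsAdicComplete I R] (φ₀ : D →+* R) (l : List R) (hl : ofList l ≤ I) :
    ∃ φ : iteratedPowerSeries D l.length →+* R,
      (maximalIdeal _).map φ = (maximalIdeal D).map φ₀ ⊔ ofList l := by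
  induction l with
  | nil => exact ⟨φ₀, by rw [ofList_nil, sup_bot_eq]; rfl⟩
  | cons x l ih =>
    rw [ofList_cons, sup_le_iff, span_singleton_le_iff_mem] at hl
    obtain ⟨φ, hφ⟩ := ih hl.2
    obtain ⟨ψ, hψC, hψX⟩ := exists_ringHom_powerSeries I φ hl.1
    refine ⟨ψ, ?_⟩
    calc (maximalIdeal (PowerSeries (iteratedPowerSeries D l.length))).map ψ
        = (maximalIdeal (iteratedPowerSeries D l.length)).map φ ⊔ span {x} := by
          rw [maximalIdeal_powerSeries_eq_map_sup, Ideal.map_sup, Ideal.map_map, hψC,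
            Ideal.map_span, Set.image_singleton, hψX]
      _ = (maximalIdeal D).map φ₀ ⊔ ofList (x :: l) := by
          rw [hφ, ofList_cons, sup_assoc, sup_comm (ofList l)]

theorem exists_injective_iteratedPowerSeries_padicInt (p : ℕ) [Fact p.Prime] (S : Type*)
    [CommRing S] [IsNoetherianRing S] [IsLocalRing S] [IsAdicComplete (maximalIdeal S) S]
    [CharP (ResidueField S) p] (hp : (p : S) ∈ nonZeroDivisors S) :
    ∃ (d : ℕ) (φ : iteratedPowerSeries ℤ_[p] d →+* S), (d + 1 : WithBot ℕ∞) = ringKrullDim S ∧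
      Function.Injective φ ∧ (maximalIdeal _).map φ ≤ maximalIdeal S ∧
      ∃ n, maximalIdeal S ^ n ≤ (maximalIdeal _).map φ := by
  have hpm : (p : S) ∈ maximalIdeal S := by
    rw [← residue_eq_zero_iff, map_natCast, CharP.cast_eq_zero]
  obtain ⟨l, hdim, hl, n, hn⟩ := exists_list_maximalIdeal_pow_le_span_sup hpm hp
  obtain ⟨φ₀⟩ := exists_ringHom_padicInt p (maximalIdeal S) hpm
  obtain ⟨φ, hφ⟩ := exists_ringHom_iteratedPowerSeries (maximalIdeal S) φ₀ l hl
  rw [PadicInt.maximalIdeal_eq_span_p, Ideal.map_span, Set.image_singleton, map_natCast] at hφ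
  have hle : (maximalIdeal _).map φ ≤ maximalIdeal S :=
    hφ ▸ sup_le ((span_singleton_le_iff_mem _).2 hpm) hl
  have : IsLocalHom φ := ((local_hom_TFAE φ).out 0 2).2 hle
  refine ⟨l.length, φ, hdim, injective_of_maximalIdeal_pow_le φ (hφ ▸ hn) ?_, hle, n, hφ ▸ hn⟩
  rw [ringKrullDim_iteratedPowerSeries, IsDiscreteValuationRing.ringKrullDim_eq_one, ← hdim,
    add_comm]

theorem isPrecomplete_of_finite {A : Type*} [CommRing A] (I : Ideal A) [IsPrecomplete I A]
    (M : Type*) [AddCommGroup M] [Module A M] [Module.Finite A M] : IsPrecomplete I M := by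
  rw [← AdicCompletion.of_surjective_iff]
  intro y
  obtain ⟨t, rfl⟩ := AdicCompletion.ofTensorProduct_surjective_of_finite I M y
  induction t with
  | zero => exact ⟨0, by simp⟩
  | tmul r x =>
    obtain ⟨a, rfl⟩ := AdicCompletion.of_surjective I A r
    refine ⟨a • x, ?_⟩
    rw [map_smul, AdicCompletion.ofTensorProduct_tmul]
    rfl
  | add s t hs ht =>
    obtain ⟨x, hx⟩ := hs
    obtain ⟨y, hy⟩ := ht
    exact ⟨x + y, by rw [map_add, map_add, hx, hy]⟩

theorem finite_of_finite_quotient_smul_top {A : Type*} [CommRing A] (I : Ideal A)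
    [IsPrecomplete I A] (M : Type*) [AddCommGroup M] [Module A M] [IsHausdorff I M]
    [Module.Finite A (M ⧸ (I • ⊤ : Submodule A M))] : Module.Finite A M := by
  obtain ⟨k, f, hf⟩ := Module.Finite.exists_fin' A (M ⧸ (I • ⊤ : Submodule A M))
  obtain ⟨g, rfl⟩ := Module.projective_lifting_property _ f (Submodule.mkQ_surjective (I • ⊤))
  have := isPrecomplete_of_finite I (Fin k → A)
  exact .of_surjective g (surjective_of_mkQ_comp_surjective hf)

theorem finite_of_maximalIdeal_pow_le {A S : Type*} [CommRing A] [IsLocalRing A]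
    [IsPrecomplete (maximalIdeal A) A] [CommRing S] [IsNoetherianRing S] [IsLocalRing S]
    [Finite (ResidueField S)] (φ : A →+* S) {n : ℕ} (hle : (maximalIdeal A).map φ ≤ maximalIdeal S)
    (hn : maximalIdeal S ^ n ≤ (maximalIdeal A).map φ) : φ.Finite := by
  algebraize [φ]
  have : IsHausdorff (maximalIdeal A) S := .of_map hle
  have : Finite (S ⧸ (maximalIdeal A • ⊤ : Submodule A S)) := by
    have : Finite (S ⧸ (maximalIdeal A).map (algebraMap A S)) := finite_quotient_iff.2 ⟨n, hn⟩
    rw [smul_top_eq_map]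
    exact .of_equiv _ (Submodule.Quotient.restrictScalarsEquiv A _).symm.toEquiv
  exact finite_of_finite_quotient_smul_top (maximalIdeal A) S

theorem exists_isMatrixEmbeddable_iteratedPowerSeries_padicInt (p : ℕ) [Fact p.Prime] (R : Type*)
    [CommRing R] [IsDomain R] [IsNoetherianRing R] [IsLocalRing R]
    [IsAdicComplete (maximalIdeal R) R] [Finite (ResidueField R)] [CharP (ResidueField R) p]
    [CharZero R] : ∃ d, IsMatrixEmbeddable R (iteratedPowerSeries ℤ_[p] d) := by
  obtain ⟨d, φ, -, hinj, hle, n, hn⟩ := exists_injective_iteratedPowerSeries_padicInt p R <|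
    mem_nonZeroDivisors_of_ne_zero (Nat.cast_ne_zero.2 (Fact.out : p.Prime).ne_zero)
  have hfin : φ.Finite := finite_of_maximalIdeal_pow_le φ hle hn
  algebraize [φ]
  have := (faithfulSMul_iff_algebraMap_injective (iteratedPowerSeries ℤ_[p] d) R).2 hinj
  exact ⟨d, hasMatrixEmbeddings_iteratedPowerSeries ℤ_[p] d R⟩

end CohenStructure

end LinearTransfer

open LinearTransfer in
theorem linear_transfer_char_zero_dim_gt_two_general (p : ℕ) [Fact p.Prime]
    (R : Type*) [CommRing R] [IsDomain R] [IsNoetherianRing R] [IsLocalRing R]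
    [IsAdicComplete (IsLocalRing.maximalIdeal R) R]
    [Finite (IsLocalRing.ResidueField R)] [CharP (IsLocalRing.ResidueField R) p] [CharZero R]
    (S : Type*) [CommRing S] [IsNoetherianRing S] [IsLocalRing S]
    [IsAdicComplete (IsLocalRing.maximalIdeal S) S] [CharP (IsLocalRing.ResidueField S) p]
    (hp : (p : S) ∈ nonZeroDivisors S) (hS : 2 < ringKrullDim S) (n : ℕ) :
    ∃ (m : ℕ) (f : Matrix.GeneralLinearGroup (Fin n) R →* Matrix.GeneralLinearGroup (Fin m) S),
      Function.Injective f := by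
  obtain ⟨d, hR⟩ := exists_isMatrixEmbeddable_iteratedPowerSeries_padicInt p R
  obtain ⟨e, ψ, hdim, hψ, -⟩ := exists_injective_iteratedPowerSeries_padicInt p S hp
  have he : 2 ≤ e := by
    rw [← hdim] at hS
    exact Nat.lt_succ_iff.1 (by exact_mod_cast hS)
  obtain ⟨θ, hθ⟩ := exists_injective_iteratedPowerSeries ℤ_[p] d he
  exact ((hR.map_injective hθ).map_injective hψ).exists_injective_generalLinearGroup n

/-- Let `R`, `S` be commutative Noetherian local pro-`p` domains of
characteristic zero and Krull dimension `> 2`. Then every subgroup of `GL_n(R)` embeds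
into `GL_m(S)` for some `m`. -/
theorem linear_transfer_char_zero_dim_gt_two (p : ℕ) [Fact p.Prime]
    (R : Type) [CommRing R] [IsDomain R] [IsNoetherianRing R] [IsLocalRing R]
    [IsAdicComplete (IsLocalRing.maximalIdeal R) R]
    [Finite (IsLocalRing.ResidueField R)] [CharP (IsLocalRing.ResidueField R) p]
    [CharZero R]
    (S : Type) [CommRing S] [IsDomain S] [IsNoetherianRing S] [IsLocalRing S]
    [IsAdicComplete (IsLocalRing.maximalIdeal S) S]
    [Finite (IsLocalRing.ResidueField S)] [CharP (IsLocalRing.ResidueField S) p]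
    [CharZero S]
    (hR : 2 < ringKrullDim R) (hS : 2 < ringKrullDim S)
    (n : ℕ) (G : Subgroup (Matrix.GeneralLinearGroup (Fin n) R)) :
    ∃ (m : ℕ) (f : G →* Matrix.GeneralLinearGroup (Fin m) S),
      Function.Injective f := by
  have hp : (p : S) ≠ 0 := Nat.cast_ne_zero.2 (Fact.out : p.Prime).ne_zero
  obtain ⟨m, f, hf⟩ := linear_transfer_char_zero_dim_gt_two_general p R S
    (mem_nonZeroDivisors_of_ne_zero hp) hS n
  exact ⟨m, f.comp G.subtype, hf.comp G.subtype_injective⟩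
end

section
/- Let p be a prime and let R and S be commutative Noetherian local pro-p domains of characteristic zero such that the Krull dimension of R is at most 2 and the Krull dimension of S is greater than or equal to the Krull dimension of R. Then for every natural number n and every subgroup G of GL_n(R) there exist a natural number m and an injective group homomorphism from G into GL_m(S). -/
/-!
If `dim R ≤ 1` let `B = ℤ_p`, and if `dim R = 2` let `B = ℤ_p⟦X⟧`, mapped to `R` by sending `X` to
an element of the maximal ideal outside every minimal prime of `p`. Then `p` (and the image of `X`)
generate an ideal primary to the maximal ideal, so by completeness `R` is a finite torsion-free
`B`-algebra. It need not be free, but its dual `Hom_B(R, B)` is: a dual modulo a parameter of `B`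
is torsion-free over the quotient, which is a principal ideal domain. Since `R` acts faithfully on
this dual, it embeds in a matrix ring over `B`.

It remains to embed `B` in `S`. If `B = ℤ_p⟦X⟧`, the maximal ideal of `S` is not minimal over `p`
because `dim S ≥ 2`, so `X` can be sent into it but outside a prime `P` containing `p`. The
preimage of `P` in `ℤ_p⟦X⟧` is then `(p)`; it contains the kernel, which therefore equals `p` times
itself because `p` is a non-zero-divisor in `S`, and vanishes by Nakayama's lemma.
-/

open IsLocalRing PowerSeries

section AdicFiniteness

variable {A : Type*} [CommRing A] {M : Type*} [AddCommGroup M] [Module A M]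

theorem isPrecomplete_of_finite (I : Ideal A) [IsPrecomplete I A] [Module.Finite A M] :
    IsPrecomplete I M := by
  rw [← AdicCompletion.of_surjective_iff]
  intro y
  obtain ⟨t, rfl⟩ := AdicCompletion.ofTensorProduct_surjective_of_finite I M y
  induction t using TensorProduct.induction_on with
  | zero => exact ⟨0, by simp⟩
  | add t₁ t₂ h₁ h₂ =>
    obtain ⟨x₁, hx₁⟩ := h₁
    obtain ⟨x₂, hx₂⟩ := h₂
    exact ⟨x₁ + x₂, by simp [hx₁, hx₂]⟩
  | tmul c x =>
    obtain ⟨c, rfl⟩ := AdicCompletion.of_surjective I A c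
    exact ⟨c • x, by rw [AdicCompletion.ofTensorProduct_tmul]; rfl⟩

theorem finite_of_finite_quotient_smul_top (I : Ideal A) [IsPrecomplete I A] [IsHausdorff I M]
    [Module.Finite A (M ⧸ (I • ⊤ : Submodule A M))] : Module.Finite A M := by
  obtain ⟨k, g, hg⟩ := Module.Finite.exists_fin' A (M ⧸ (I • ⊤ : Submodule A M))
  obtain ⟨f, hf⟩ := Module.projective_lifting_property (Submodule.mkQ _) g
    (Submodule.mkQ_surjective _)
  have : IsPrecomplete I (Fin k → A) := isPrecomplete_of_finite I
  exact Module.Finite.of_surjective f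
    (surjective_of_mkQ_comp_surjective (I := I) (by rwa [hf]))

theorem finite_of_finite_quotient_of_isLocalRing (I : Ideal A) [IsPrecomplete I A]
    {R : Type*} [CommRing R] [IsNoetherianRing R] [IsLocalRing R] [Algebra A R] [Module R M]
    [IsScalarTower A R M] [Module.Finite R M] (hI : I.map (algebraMap A R) ≠ ⊤)
    [Module.Finite A (M ⧸ (I • ⊤ : Submodule A M))] : Module.Finite A M := by
  have : IsHausdorff I M :=
    IsHausdorff.map_algebraMap_iff.mp (IsHausdorff.of_isLocalRing _ M hI)
  exact finite_of_finite_quotient_smul_top I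

variable {R : Type*} [CommRing R] [IsNoetherianRing R] [IsLocalRing R] [Algebra A R]
  {I : Ideal A} [IsPrecomplete I A]

theorem finite_of_finite_quotient_map (hI : I.map (algebraMap A R) ≠ ⊤)
    [Module.Finite A (R ⧸ I.map (algebraMap A R))] : Module.Finite A R := by
  have : Module.Finite A (R ⧸ (I • ⊤ : Submodule A R)) := by
    rw [Ideal.smul_top_eq_map]
    exact Module.Finite.equiv (Submodule.Quotient.restrictScalarsEquiv A
        (I.map (algebraMap A R))).symm
  exact finite_of_finite_quotient_of_isLocalRing (R := R) I hI

theorem finite_quotient_of_finite_quotient_sup (hI : I.map (algebraMap A R) ≠ ⊤) (J : Ideal R)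
    [Module.Finite A (R ⧸ J ⊔ I.map (algebraMap A R))] : Module.Finite A (R ⧸ J) := by
  have hmap : I.map (algebraMap A (R ⧸ J)) =
      (I.map (algebraMap A R)).map (Ideal.Quotient.mk J) := (Ideal.map_map _ _).symm
  have : Module.Finite A ((R ⧸ J) ⧸ (I • ⊤ : Submodule A (R ⧸ J))) := by
    rw [Ideal.smul_top_eq_map, hmap]
    exact Module.Finite.equiv ((DoubleQuot.quotQuotEquivQuotSupₐ A J _).symm.toLinearEquiv.trans
      (Submodule.Quotient.restrictScalarsEquiv A
        ((I.map (algebraMap A R)).map (Ideal.Quotient.mk J))).symm)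
  exact finite_of_finite_quotient_of_isLocalRing (R := R) I hI

theorem finite_powerSeries_of_finite_quotient_sup [Algebra A⟦X⟧ R] [IsScalarTower A A⟦X⟧ R]
    (hI : I.map (algebraMap A R) ≠ ⊤) (hX : algebraMap A⟦X⟧ R X ∈ maximalIdeal R)
    [Module.Finite A (R ⧸ Ideal.span {algebraMap A⟦X⟧ R X} ⊔ I.map (algebraMap A R))] :
    Module.Finite A⟦X⟧ R := by
  have := finite_quotient_of_finite_quotient_sup hI (Ideal.span {algebraMap A⟦X⟧ R X})
  have hspan : (Ideal.span {(X : A⟦X⟧)}).map (algebraMap A⟦X⟧ R) =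
      Ideal.span {algebraMap A⟦X⟧ R X} := by rw [Ideal.map_span, Set.image_singleton]
  have : Module.Finite A⟦X⟧ (R ⧸ (Ideal.span {(X : A⟦X⟧)}).map (algebraMap A⟦X⟧ R)) := by
    rw [hspan]
    exact Module.Finite.of_restrictScalars_finite A _ _
  refine finite_of_finite_quotient_map (I := Ideal.span {(X : A⟦X⟧)}) ?_
  rw [hspan]
  exact ne_top_of_le_ne_top (Ideal.IsPrime.ne_top inferInstance)
    ((Ideal.span_singleton_le_iff_mem _).2 hX)

end AdicFiniteness

section Parameters

variable {R : Type*} [CommRing R]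

theorem height_add_one_le_height_sup_span_singleton {I : Ideal R} {r : R}
    (hr : ∀ Q ∈ I.minimalPrimes, r ∉ Q) : I.height + 1 ≤ (I ⊔ Ideal.span {r}).height := by
  rw [Ideal.height_eq_inf_minimalPrimes (I ⊔ Ideal.span {r})]
  refine le_iInf₂ fun Q hQ ↦ ?_
  have := hQ.isPrime
  obtain ⟨P, hP, hPQ⟩ := Ideal.exists_minimalPrimes_le (le_sup_left.trans hQ.1.2)
  have := hP.isPrime
  have hrQ : r ∈ Q := hQ.1.2 (Ideal.mem_sup_right (Ideal.mem_span_singleton_self r))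
  have hlt : P < Q := lt_of_le_of_ne hPQ fun h ↦ hr P hP (h ▸ hrQ)
  calc I.height + 1 ≤ P.height + 1 := by gcongr; exact hP.1.2
    _ ≤ Q.height := Ideal.height_add_one_le_of_lt_of_isPrime hlt

variable [IsNoetherianRing R]

theorem exists_mem_forall_notMem_minimalPrimes {I P : Ideal R} [P.IsPrime] (hIP : I ≤ P)
    (hP : P ∉ I.minimalPrimes) : ∃ r ∈ P, ∀ Q ∈ I.minimalPrimes, r ∉ Q := by
  by_contra! h
  have hcover : (P : Set R) ⊆ ⋃ Q ∈ I.minimalPrimes, (Q : Set R) := fun x hx ↦ by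
    obtain ⟨Q, hQ, hxQ⟩ := h x hx
    exact Set.mem_biUnion hQ hxQ
  obtain ⟨Q, hQ, hPQ⟩ := (Ideal.subset_union_prime_finite
    (Ideal.finite_minimalPrimes_of_isNoetherianRing R I) (f := id) 0 0
    (fun _ hQ _ _ ↦ hQ.isPrime)).1 hcover
  have hQP : Q ≤ P := hQ.2 ⟨inferInstance, hIP⟩ hPQ
  exact hP (le_antisymm hQP hPQ ▸ hQ)

theorem finite_quotient_of_maximalIdeal_mem_minimalPrimes [IsLocalRing R] [Finite (ResidueField R)]
    {I : Ideal R} (hI : maximalIdeal R ∈ I.minimalPrimes) : Finite (R ⧸ I) := by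
  have : Finite (R ⧸ maximalIdeal R) := ‹Finite (ResidueField R)›
  have hrad : maximalIdeal R ≤ I.radical := by
    rw [Ideal.radical_eq_sInf]
    exact le_sInf fun Q hQ ↦ hI.2 ⟨hQ.2, hQ.1⟩ (le_maximalIdeal hQ.2.ne_top)
  obtain ⟨k, hk⟩ := Ideal.exists_radical_pow_le_of_fg I (IsNoetherian.noetherian _)
  have hle : maximalIdeal R ^ k ≤ I := (Ideal.pow_right_mono hrad k).trans hk
  have : Finite (R ⧸ maximalIdeal R ^ k) :=
    Ideal.finite_quotient_pow (IsNoetherian.noetherian _) k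
  exact Finite.of_surjective _ (Ideal.Quotient.factor_surjective hle)

theorem maximalIdeal_mem_minimalPrimes_span_singleton_iff [IsLocalRing R] {x : R}
    (hx : x ∈ nonZeroDivisors R) (hxm : x ∈ maximalIdeal R) :
    maximalIdeal R ∈ (Ideal.span {x}).minimalPrimes ↔ ringKrullDim R ≤ 1 := by
  rw [← maximalIdeal_height_eq_ringKrullDim]
  norm_cast
  refine ⟨Ideal.height_le_one_of_isPrincipal_of_mem_minimalPrimes _ _, fun h ↦ ?_⟩
  exact Ideal.mem_minimalPrimes_of_height_le ((Ideal.span_singleton_le_iff_mem _).2 hxm)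
    (h.trans (Ideal.one_le_height_span_singleton_of_mem_nonZeroDivisors hx))

theorem maximalIdeal_mem_minimalPrimes_span_sup_span [IsLocalRing R] {x y : R}
    (hx : x ∈ nonZeroDivisors R) (hxm : x ∈ maximalIdeal R) (hym : y ∈ maximalIdeal R)
    (hy : ∀ Q ∈ (Ideal.span {x}).minimalPrimes, y ∉ Q) (hR : ringKrullDim R ≤ 2) :
    maximalIdeal R ∈ (Ideal.span {x} ⊔ Ideal.span {y}).minimalPrimes := by
  have hle : Ideal.span {x} ⊔ Ideal.span {y} ≤ maximalIdeal R := by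
    simp [hxm, hym, -mem_maximalIdeal]
  refine Ideal.mem_minimalPrimes_of_height_le hle ?_
  rw [← maximalIdeal_height_eq_ringKrullDim] at hR
  calc (maximalIdeal R).height ≤ 1 + 1 := by rw [one_add_one_eq_two]; exact WithBot.coe_le_coe.1 hR
    _ ≤ (Ideal.span {x}).height + 1 := by
      gcongr; exact Ideal.one_le_height_span_singleton_of_mem_nonZeroDivisors hx
    _ ≤ _ := height_add_one_le_height_sup_span_singleton hy

end Parameters

section Injectivity

theorem injective_of_ker_le_span {B T : Type*} [CommRing B] [IsNoetherianRing B] [CommRing T]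
    {b : B} (hb : b ∈ (⊥ : Ideal B).jacobson) (ψ : B →+* T) (hψb : ψ b ∈ nonZeroDivisors T)
    (hker : RingHom.ker ψ ≤ Ideal.span {b}) : Function.Injective ψ := by
  rw [RingHom.injective_iff_ker_eq_bot]
  refine Submodule.eq_bot_of_le_smul_of_le_jacobson_bot (Ideal.span {b}) _
    (IsNoetherian.noetherian _) (fun x hx ↦ ?_) ((Ideal.span_singleton_le_iff_mem _).2 hb)
  obtain ⟨y, rfl⟩ := Ideal.mem_span_singleton.1 (hker hx)
  have hy : ψ y = 0 := by
    rw [RingHom.mem_ker, map_mul] at hx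
    exact (mul_left_mem_nonZeroDivisors_eq_zero_iff hψb).1 hx
  exact Ideal.mul_mem_mul (Ideal.mem_span_singleton_self b) hy

variable {A : Type*} [CommRing A] [IsLocalRing A] {ϖ : A}

theorem eq_span_C_of_isPrime (hϖ : maximalIdeal A = Ideal.span {ϖ}) {Q : Ideal A⟦X⟧}
    [Q.IsPrime] (hC : C ϖ ∈ Q) (hX : X ∉ Q) : Q = Ideal.span {C ϖ} := by
  refine PowerSeries.eq_of_le_of_X_notMem_of_fg_of_isPrime
    ((Ideal.span_singleton_le_iff_mem _).2 hC) hX ⟨{C ϖ}, by simp⟩ ?_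
  rw [Ideal.map_span, Set.image_singleton, constantCoeff_C, ← hϖ]
  refine Ideal.map_le_of_le_comap fun f hf ↦ ?_
  by_contra hunit
  have hf_unit : IsUnit f := isUnit_iff_constantCoeff.2 (by simpa using hunit)
  exact Ideal.IsPrime.ne_top' (Ideal.eq_top_of_isUnit_mem Q hf hf_unit)

variable [IsNoetherianRing A] {T : Type*} [CommRing T]

theorem injective_of_uniformizer_mem_nonZeroDivisors [Nontrivial T]
    (hϖ : maximalIdeal A = Ideal.span {ϖ}) (φ : A →+* T) (hφϖ : φ ϖ ∈ nonZeroDivisors T) :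
    Function.Injective φ := by
  refine injective_of_ker_le_span ?_ φ hφϖ ?_
  · rw [jacobson_eq_maximalIdeal _ bot_ne_top, hϖ]
    exact Ideal.mem_span_singleton_self ϖ
  · rw [← hϖ]
    exact le_maximalIdeal (RingHom.ker_ne_top φ)

theorem powerSeries_hom_injective_of_X_notMem (hϖ : maximalIdeal A = Ideal.span {ϖ})
    (ψ : A⟦X⟧ →+* T) (P : Ideal T) [P.IsPrime] (hψϖ : ψ (C ϖ) ∈ nonZeroDivisors T)
    (hψϖP : ψ (C ϖ) ∈ P) (hψX : ψ X ∉ P) : Function.Injective ψ := by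
  refine injective_of_ker_le_span ?_ ψ hψϖ ?_
  · rw [jacobson_eq_maximalIdeal _ bot_ne_top, mem_maximalIdeal, mem_nonunits_iff,
      isUnit_iff_constantCoeff, constantCoeff_C, ← mem_nonunits_iff, ← mem_maximalIdeal, hϖ]
    exact Ideal.mem_span_singleton_self ϖ
  · rw [← eq_span_C_of_isPrime hϖ (Q := P.comap ψ) hψϖP hψX]
    exact Ideal.comap_mono bot_le

end Injectivity

section Dual

variable {B N : Type*} [CommRing B] [AddCommGroup N] [Module B N]

theorem exists_smul_eq_dual_of_forall_dvd {a : B} (ha : a ∈ nonZeroDivisors B) {f : Module.Dual B N}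
    (h : ∀ x, a ∣ f x) : ∃ g : Module.Dual B N, a • g = f := by
  choose g hg using h
  have hcancel {x y : B} : a * x = a * y → x = y := (mul_cancel_left_mem_nonZeroDivisors ha).1
  let g' : Module.Dual B N :=
    { toFun := g
      map_add' x y := hcancel (by rw [← hg, map_add, hg, hg, mul_add])
      map_smul' c x := hcancel (by
        rw [← hg, map_smul, hg, smul_eq_mul, RingHom.id_apply, smul_eq_mul, mul_left_comm]) }
  exact ⟨g', LinearMap.ext fun x ↦ (hg x).symm⟩

theorem isTorsionFree_quotSMulTop_dual {a : B} (ha : a ∈ nonZeroDivisors B)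
    [IsDomain (B ⧸ Ideal.span {a})] :
    Module.IsTorsionFree (B ⧸ Ideal.span {a}) (QuotSMulTop a (Module.Dual B N)) := by
  have hprime : (Ideal.span {a}).IsPrime := (Ideal.Quotient.isDomain_iff_prime _).1 inferInstance
  rw [Module.isTorsionFree_iff_smul_eq_zero]
  intro c f hcf
  obtain ⟨c, rfl⟩ := Ideal.Quotient.mk_surjective c
  obtain ⟨f, rfl⟩ := Submodule.Quotient.mk_surjective _ f
  rw [Ideal.Quotient.eq_zero_iff_mem, Submodule.Quotient.mk_eq_zero,
    Submodule.mem_smul_pointwise_iff_exists]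
  replace hcf : (Submodule.Quotient.mk (c • f) : QuotSMulTop a (Module.Dual B N)) = 0 := hcf
  rw [Submodule.Quotient.mk_eq_zero, Submodule.mem_smul_pointwise_iff_exists] at hcf
  obtain ⟨g, -, hg⟩ := hcf
  refine or_iff_not_imp_left.2 fun hc ↦ ?_
  have hdvd (x : N) : a ∣ f x := by
    have hcfx : c * f x ∈ Ideal.span {a} :=
      Ideal.mem_span_singleton.2 ⟨g x, (LinearMap.congr_fun hg x).symm⟩
    exact Ideal.mem_span_singleton.1 ((hprime.mem_or_mem hcfx).resolve_left hc)
  obtain ⟨f', hf'⟩ := exists_smul_eq_dual_of_forall_dvd ha hdvd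
  exact ⟨f', trivial, hf'⟩

variable [IsNoetherianRing B] [Module.Finite B N]

theorem free_dual_of_isPrincipalIdealRing_quotient {a : B} (ha : a ∈ nonZeroDivisors B)
    (haj : a ∈ (⊥ : Ideal B).jacobson) [IsDomain (B ⧸ Ideal.span {a})]
    [IsPrincipalIdealRing (B ⧸ Ideal.span {a})] : Module.Free B (Module.Dual B N) := by
  have hreg : IsSMulRegular (Module.Dual B N) a := fun f g h ↦ LinearMap.ext fun x ↦
    (mul_cancel_left_mem_nonZeroDivisors ha).1 (LinearMap.congr_fun h x)
  have := Module.finitePresentation_of_finite B (Module.Dual B N)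
  rw [← Module.free_quotSMulTop_iff_free B _ haj hreg]
  have : Module.Finite (B ⧸ Ideal.span {a}) (QuotSMulTop a (Module.Dual B N)) :=
    Module.Finite.of_restrictScalars_finite B _ _
  have := isTorsionFree_quotSMulTop_dual (N := N) ha
  infer_instance

theorem free_dual_powerSeries {A N : Type*} [CommRing A] [IsDomain A] [IsPrincipalIdealRing A]
    [AddCommGroup N] [Module A⟦X⟧ N] [Module.Finite A⟦X⟧ N] :
    Module.Free A⟦X⟧ (Module.Dual A⟦X⟧ N) := by
  have hker : Ideal.span {(X : A⟦X⟧)} = RingHom.ker (constantCoeff (R := A)) := by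
    ext f
    rw [Ideal.mem_span_singleton, X_dvd_iff, RingHom.mem_ker]
  let e : (A⟦X⟧ ⧸ Ideal.span {(X : A⟦X⟧)}) ≃+* A :=
    (Ideal.quotEquivOfEq hker).trans
      (RingHom.quotientKerEquivOfSurjective constantCoeff_surj)
  have : IsDomain (A⟦X⟧ ⧸ Ideal.span {(X : A⟦X⟧)}) := e.toMulEquiv.isDomain A
  have : IsPrincipalIdealRing (A⟦X⟧ ⧸ Ideal.span {(X : A⟦X⟧)}) :=
    IsPrincipalIdealRing.of_surjective e.symm e.symm.surjective
  refine free_dual_of_isPrincipalIdealRing_quotient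
    (mem_nonZeroDivisors_of_ne_zero (X_ne_zero (R := A))) ?_
  refine Ideal.mem_jacobson_bot.2 fun f ↦ isUnit_iff_constantCoeff.2 ?_
  simp

end Dual

section Torsionless

variable {B M : Type*} [CommRing B] [IsDomain B] [IsNoetherianRing B] [AddCommGroup M] [Module B M]
  [Module.Finite B M] [Module.IsTorsionFree B M]

theorem exists_dual_ne_zero {x : M} (hx : x ≠ 0) : ∃ f : Module.Dual B M, f x ≠ 0 := by
  let K := FractionRing B
  let ι := LocalizedModule.mkLinearMap (nonZeroDivisors B) M
  have hι : Function.Injective ι :=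
    (IsLocalizedModule.injective_iff_isRegular (nonZeroDivisors B) ι).2 fun c ↦
      (isRegular_iff_mem_nonZeroDivisors.2 c.2).isSMulRegular
  obtain ⟨g, hg⟩ := Module.Projective.exists_dual_ne_zero K ((map_ne_zero_iff ι hι).2 hx)
  have := Module.finitePresentation_of_finite B M
  obtain ⟨f, s, hf⟩ := Module.FinitePresentation.exists_lift_of_isLocalizedModule
    (nonZeroDivisors B) (Algebra.linearMap B K) (g.restrictScalars B ∘ₗ ι)
  have hfx : algebraMap B K (f x) = (s : B) • g (ι x) := LinearMap.congr_fun hf x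
  refine ⟨f, fun h ↦ smul_ne_zero (nonZeroDivisors.coe_ne_zero s) hg ?_⟩
  rw [← hfx, h, map_zero]

end Torsionless

section DualRepresentation

variable (B R : Type*) [CommRing B] [CommRing R] [Algebra B R]

/-- The action of `R` on its `B`-linear dual, `(r • f) x = f (r * x)`. -/
def dualRepresentation : R →+* Module.End B (Module.Dual B R) where
  toFun r := (LinearMap.mulLeft B r).dualMap
  map_one' := by ext; simp
  map_zero' := by ext; simp
  map_mul' x y := by ext; simp [mul_left_comm]
  map_add' x y := by ext; simp [add_mul]

theorem dualRepresentation_injective [IsDomain B] [IsNoetherianRing B] [Module.Finite B R]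
    [Module.IsTorsionFree B R] : Function.Injective (dualRepresentation B R) := by
  refine (injective_iff_map_eq_zero _).2 fun r hr ↦ ?_
  by_contra hr0
  obtain ⟨f, hf⟩ := exists_dual_ne_zero (B := B) hr0
  have hf1 : f (r * 1) = 0 := LinearMap.congr_fun (LinearMap.congr_fun hr f) 1
  exact hf (by rwa [mul_one] at hf1)

variable {B R}

theorem exists_matrix_hom_injective [IsDomain B] [IsNoetherianRing B] [Module.Finite B R]
    [Module.IsTorsionFree B R] [Module.Free B (Module.Dual B R)] {S : Type*} [CommRing S]
    {ψ : B →+* S} (hψ : Function.Injective ψ) :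
    ∃ (d : ℕ) (f : R →+* Matrix (Fin d) (Fin d) S), Function.Injective f := by
  let b := Module.finBasis B (Module.Dual B R)
  let e := (LinearMap.toMatrixAlgEquiv b).toRingEquiv
  exact ⟨_, ψ.mapMatrix.comp (e.toRingHom.comp (dualRepresentation B R)),
    (Matrix.map_injective hψ).comp (e.injective.comp (dualRepresentation_injective B R))⟩

end DualRepresentation

theorem exists_generalLinearGroup_hom_injective {R S : Type*} [CommRing R] [CommRing S] {d : ℕ}
    {f : R →+* Matrix (Fin d) (Fin d) S} (hf : Function.Injective f) (n : ℕ) :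
    ∃ (m : ℕ) (F : Matrix.GeneralLinearGroup (Fin n) R →* Matrix.GeneralLinearGroup (Fin m) S),
      Function.Injective F := by
  let comp := Matrix.compRingEquiv (Fin n) (Fin d) S
  let reindex := Matrix.reindexRingEquiv S (finProdFinEquiv (m := n) (n := d))
  let g := reindex.toRingHom.comp (comp.toRingHom.comp f.mapMatrix)
  have hg : Function.Injective g :=
    reindex.injective.comp (comp.injective.comp (Matrix.map_injective hf))
  exact ⟨n * d, Units.map g.toMonoidHom, Units.map_injective hg⟩

section AdicHom

variable {R : Type*} [CommRing R] {I : Ideal R} [IsAdicComplete I R]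

theorem exists_padicInt_hom (p : ℕ) [Fact p.Prime] (hp : (p : R) ∈ I) :
    Nonempty (ℤ_[p] →+* R) := by
  have hchar (n : ℕ) : ringChar (R ⧸ I ^ n) ∣ p ^ n := by
    rw [← ringChar.spec, Nat.cast_pow, ← map_natCast (Ideal.Quotient.mk (I ^ n)), ← map_pow,
      Ideal.Quotient.eq_zero_iff_mem]
    exact Ideal.pow_mem_pow hp n
  refine ⟨IsAdicComplete.liftRingHom I
    (fun n ↦ (ZMod.castHom (hchar n) (R ⧸ I ^ n)).comp (PadicInt.toZModPow n)) fun {m n} hmn ↦ ?_⟩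
  rw [← PadicInt.zmod_cast_comp_toZModPow m n hmn, ← RingHom.comp_assoc, ← RingHom.comp_assoc]
  congr 1
  exact RingHom.ext_zmod _ _

theorem exists_powerSeries_hom {B : Type*} [CommRing B] (φ : B →+* R) {r : R} (hr : r ∈ I) :
    ∃ ψ : B⟦X⟧ →+* R, ψ.comp C = φ ∧ ψ X = r := by
  let : WithIdeal R := ⟨I⟩
  obtain ⟨_, _⟩ := (IsAdic.isAdicComplete_iff (R := R) (I := I) rfl).1 inferInstance
  let : UniformSpace B := ⊥
  have : DiscreteUniformity B := ⟨rfl⟩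
  have hφ : Continuous φ := continuous_of_discreteTopology
  have hr_eval : HasEval r := WithIdeal.isTopologicallyNilpotent_of_mem hr
  exact ⟨eval₂Hom hφ hr_eval, RingHom.ext fun b ↦ by simp [coe_eval₂Hom], by simp [coe_eval₂Hom]⟩

end AdicHom

section PadicNormalization

theorem natCast_mem_maximalIdeal (p : ℕ) (T : Type*) [CommRing T] [IsLocalRing T]
    [CharP (ResidueField T) p] : (p : T) ∈ maximalIdeal T := by
  rw [← residue_eq_zero_iff, map_natCast, CharP.cast_eq_zero]

variable {p : ℕ} [Fact p.Prime] {T : Type*} [CommRing T]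

theorem map_maximalIdeal_padicInt [Algebra ℤ_[p] T] :
    (maximalIdeal ℤ_[p]).map (algebraMap ℤ_[p] T) = Ideal.span {(p : T)} := by
  rw [PadicInt.maximalIdeal_eq_span_p, Ideal.map_span, Set.image_singleton, map_natCast]

theorem padicInt_hom_injective [Nontrivial T] (hp : (p : T) ∈ nonZeroDivisors T)
    (φ : ℤ_[p] →+* T) : Function.Injective φ :=
  injective_of_uniformizer_mem_nonZeroDivisors PadicInt.maximalIdeal_eq_span_p φ
    (by rwa [map_natCast])

theorem padicInt_powerSeries_hom_injective (hp : (p : T) ∈ nonZeroDivisors T)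
    (hp_unit : ¬ IsUnit (p : T)) {ψ : ℤ_[p]⟦X⟧ →+* T}
    (hX : ∀ Q ∈ (Ideal.span {(p : T)}).minimalPrimes, ψ X ∉ Q) :
    Function.Injective ψ := by
  obtain ⟨Q, hQ⟩ := Ideal.nonempty_minimalPrimes (mt Ideal.span_singleton_eq_top.1 hp_unit)
  have := hQ.isPrime
  have hψp : ψ (C (p : ℤ_[p])) = p := by rw [map_natCast, map_natCast]
  refine powerSeries_hom_injective_of_X_notMem PadicInt.maximalIdeal_eq_span_p ψ Q ?_ ?_ (hX Q hQ)
  · rwa [hψp]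
  · rw [hψp]
    exact hQ.1.2 (Ideal.mem_span_singleton_self _)

variable [IsNoetherianRing T] [IsLocalRing T]

theorem padicInt_hom_finite [Finite (ResidueField T)] (hp : (p : T) ∈ nonZeroDivisors T)
    (hpm : (p : T) ∈ maximalIdeal T) (hT : ringKrullDim T ≤ 1) (φ : ℤ_[p] →+* T) : φ.Finite := by
  algebraize [φ]
  have : Finite (T ⧸ (maximalIdeal ℤ_[p]).map (algebraMap ℤ_[p] T)) := by
    rw [map_maximalIdeal_padicInt]
    exact finite_quotient_of_maximalIdeal_mem_minimalPrimes
      ((maximalIdeal_mem_minimalPrimes_span_singleton_iff hp hpm).2 hT)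
  refine finite_of_finite_quotient_map (I := maximalIdeal ℤ_[p]) ?_
  rwa [map_maximalIdeal_padicInt, Ne, Ideal.span_singleton_eq_top]

theorem padicInt_powerSeries_hom_finite [Finite (ResidueField T)]
    (hp : (p : T) ∈ nonZeroDivisors T) (hpm : (p : T) ∈ maximalIdeal T) (hT : ringKrullDim T ≤ 2)
    {ψ : ℤ_[p]⟦X⟧ →+* T} (hXm : ψ X ∈ maximalIdeal T)
    (hX : ∀ Q ∈ (Ideal.span {(p : T)}).minimalPrimes, ψ X ∉ Q) :
    ψ.Finite := by
  algebraize [ψ, ψ.comp C]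
  have : Finite (T ⧸ Ideal.span {algebraMap ℤ_[p]⟦X⟧ T X} ⊔
      (maximalIdeal ℤ_[p]).map (algebraMap ℤ_[p] T)) := by
    rw [map_maximalIdeal_padicInt, sup_comm]
    exact finite_quotient_of_maximalIdeal_mem_minimalPrimes
      (maximalIdeal_mem_minimalPrimes_span_sup_span hp hpm hXm hX hT)
  refine finite_powerSeries_of_finite_quotient_sup (I := maximalIdeal ℤ_[p]) ?_ hXm
  rwa [map_maximalIdeal_padicInt, Ne, Ideal.span_singleton_eq_top]

theorem exists_padicInt_powerSeries_hom [IsAdicComplete (maximalIdeal T) T]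
    (hp : (p : T) ∈ nonZeroDivisors T) (hpm : (p : T) ∈ maximalIdeal T)
    (hT : ¬ ringKrullDim T ≤ 1) :
    ∃ ψ : ℤ_[p]⟦X⟧ →+* T, ψ X ∈ maximalIdeal T ∧
      ∀ Q ∈ (Ideal.span {(p : T)}).minimalPrimes, ψ X ∉ Q := by
  obtain ⟨r, hrm, hr⟩ := exists_mem_forall_notMem_minimalPrimes
    ((Ideal.span_singleton_le_iff_mem _).2 hpm)
    (mt (maximalIdeal_mem_minimalPrimes_span_singleton_iff hp hpm).1 hT)
  obtain ⟨φ⟩ := exists_padicInt_hom p hpm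
  obtain ⟨ψ, -, rfl⟩ := exists_powerSeries_hom φ hrm
  exact ⟨ψ, hrm, hr⟩

end PadicNormalization

theorem linear_transfer_char_zero_dim_le_two_general (p : ℕ) [Fact p.Prime]
    {R : Type*} [CommRing R] [IsDomain R] [IsNoetherianRing R] [IsLocalRing R]
    [IsAdicComplete (maximalIdeal R) R] [Finite (ResidueField R)] [CharP (ResidueField R) p]
    [CharZero R]
    {S : Type*} [CommRing S] [IsNoetherianRing S] [IsLocalRing S]
    [IsAdicComplete (maximalIdeal S) S] [CharP (ResidueField S) p]
    (hpS : (p : S) ∈ nonZeroDivisors S)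
    (hR : ringKrullDim R ≤ 2) (hRS : ringKrullDim R ≤ ringKrullDim S) :
    ∃ (d : ℕ) (f : R →+* Matrix (Fin d) (Fin d) S), Function.Injective f := by
  have hpR : (p : R) ∈ nonZeroDivisors R :=
    mem_nonZeroDivisors_of_ne_zero (Nat.cast_ne_zero.2 (Fact.out : p.Prime).ne_zero)
  have hpmR := natCast_mem_maximalIdeal p R
  have hpmS := natCast_mem_maximalIdeal p S
  by_cases hR1 : ringKrullDim R ≤ 1
  · obtain ⟨φ⟩ := exists_padicInt_hom p hpmR
    obtain ⟨φS⟩ := exists_padicInt_hom p hpmS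
    have hφ := padicInt_hom_finite hpR hpmR hR1 φ
    algebraize [φ]
    have := Module.isTorsionFree_iff_algebraMap_injective.2 (padicInt_hom_injective hpR φ)
    exact exists_matrix_hom_injective (padicInt_hom_injective hpS φS)
  · obtain ⟨ψ, hXm, hX⟩ := exists_padicInt_powerSeries_hom hpR hpmR hR1
    obtain ⟨ψS, -, hXS⟩ := exists_padicInt_powerSeries_hom hpS hpmS fun h ↦ hR1 (hRS.trans h)
    have hψ := padicInt_powerSeries_hom_injective hpR hpmR hX
    have hψS := padicInt_powerSeries_hom_injective hpS hpmS hXS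
    have hψ_fin := padicInt_powerSeries_hom_finite hpR hpmR hR hXm hX
    algebraize [ψ]
    have := Module.isTorsionFree_iff_algebraMap_injective.2 hψ
    have := free_dual_powerSeries (A := ℤ_[p]) (N := R)
    exact exists_matrix_hom_injective hψS

/-- Let `R`, `S` be commutative Noetherian local pro-`p` domains of
characteristic zero with `Krull dim R ≤ 2` and `Krull dim S ≥ Krull dim R`. Then every
subgroup of `GL_n(R)` embeds into `GL_m(S)` for some `m`. -/
theorem linear_transfer_char_zero_dim_le_two (p : ℕ) [Fact p.Prime]
    (R : Type) [CommRing R] [IsDomain R] [IsNoetherianRing R] [IsLocalRing R]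
    [IsAdicComplete (IsLocalRing.maximalIdeal R) R]
    [Finite (IsLocalRing.ResidueField R)] [CharP (IsLocalRing.ResidueField R) p]
    [CharZero R]
    (S : Type) [CommRing S] [IsDomain S] [IsNoetherianRing S] [IsLocalRing S]
    [IsAdicComplete (IsLocalRing.maximalIdeal S) S]
    [Finite (IsLocalRing.ResidueField S)] [CharP (IsLocalRing.ResidueField S) p]
    [CharZero S]
    (hR : ringKrullDim R ≤ 2) (hRS : ringKrullDim R ≤ ringKrullDim S)
    (n : ℕ) (G : Subgroup (Matrix.GeneralLinearGroup (Fin n) R)) :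
    ∃ (m : ℕ) (f : G →* Matrix.GeneralLinearGroup (Fin m) S),
      Function.Injective f := by
  obtain ⟨d, f, hf⟩ := linear_transfer_char_zero_dim_le_two_general p
    (mem_nonZeroDivisors_of_ne_zero (Nat.cast_ne_zero.2 (Fact.out : p.Prime).ne_zero)) hR hRS
  obtain ⟨m, F, hF⟩ := exists_generalLinearGroup_hom_injective hf n
  exact ⟨m, F.comp G.subtype, hF.comp Subtype.val_injective⟩
end

section
/- Let p be a prime and set 𝐩 = p if p is odd and 𝐩 = 4 if p = 2. Let D be a (possibly noncommutative) ring that is an algebra over the ring ℤ_p of p-adic integers and is torsion-free as a ℤ_p-module. Then for every a ∈ D with a ∈ 𝐩D and every n ≥ 1 there exists b ∈ 𝐩D with n! · b = aⁿ (and b is unique since D is torsion-free); moreover, for every k there exists N such that for all n ≥ N, every b ∈ D with n! · b = aⁿ satisfies b ∈ p^k D. (In other words, aⁿ/n! lies in 𝐩D and aⁿ/n! → 0 in the p-adic filtration topology.) -/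
/-- `𝐩 = p` for odd `p` and `𝐩 = 4` for `p = 2`. -/
def padicBound (p : ℕ) : ℕ := if p = 2 then 4 else p

/-!
Legendre's formula gives `(p - 1) v_p(n!) ≤ n - 1` for `n ≥ 1`. If `a ∈ p ^ e D` with
`e > 1 / (p - 1)`, the convergence condition of the `p`-adic exponential, then `e n - v_p(n!)` is at
least `e` for `n ≥ 1` and grows at least linearly in `n`. Integers prime to `p` are invertible in
`D`, so dividing `a ^ n` by `n!` costs only the factor `p ^ v_p(n!)`.
-/

theorem exists_padicBound_eq_pow {p : ℕ} (hp : p.Prime) :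
    ∃ e : ℕ, padicBound p = p ^ e ∧ 1 < e * (p - 1) := by
  obtain rfl | hp_ne_two := eq_or_ne p 2
  · exact ⟨2, rfl, by norm_num⟩
  · have := hp.two_le
    exact ⟨1, by simp [padicBound, hp_ne_two], by omega⟩

section Valuation

variable {p e : ℕ} [Fact p.Prime]

theorem two_mul_padicValNat_factorial_le (he : 1 < e * (p - 1)) (n : ℕ) :
    2 * padicValNat p n.factorial ≤ e * (n - 1) := by
  obtain rfl | hn := eq_or_ne n 0
  · simp
  · have legendre := sub_one_mul_padicValNat_factorial_lt_of_ne_zero p hn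
    calc
      2 * padicValNat p n.factorial ≤ e * (p - 1) * padicValNat p n.factorial := by gcongr; omega
      _ = e * ((p - 1) * padicValNat p n.factorial) := mul_assoc _ _ _
      _ ≤ e * (n - 1) := by gcongr; omega

theorem padicValNat_factorial_add_self_le (he : 1 < e * (p - 1)) {n : ℕ} (hn : 1 ≤ n) :
    padicValNat p n.factorial + e ≤ e * n := by
  obtain ⟨m, rfl⟩ := Nat.exists_eq_add_of_le' hn
  have := two_mul_padicValNat_factorial_le he (m + 1)
  rw [Nat.add_sub_cancel] at this
  rw [mul_add_one]
  omega

theorem padicValNat_factorial_add_le (he : 1 < e * (p - 1)) {k n : ℕ} (hn : 2 * k ≤ n) :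
    padicValNat p n.factorial + k ≤ e * n := by
  have he_pos : 0 < e := Nat.pos_of_mul_pos_right (zero_lt_one.trans he)
  have := two_mul_padicValNat_factorial_le he n
  have : e * (n - 1) ≤ e * n := by gcongr; omega
  have : n ≤ e * n := Nat.le_mul_of_pos_left n he_pos
  omega

end Valuation

section PLocal

variable {p : ℕ} [hp : Fact p.Prime] {D : Type*} [Semiring D]

theorem natCast_dvd_iff_pow_padicValNat_dvd (hD : ∀ m : ℕ, p.Coprime m → IsUnit (m : D))
    {m : ℕ} (hm : m ≠ 0) {x : D} : (m : D) ∣ x ↔ (p : D) ^ padicValNat p m ∣ x := by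
  have hunit : IsUnit ((m / p ^ m.factorization p : ℕ) : D) :=
    hD _ (Nat.coprime_ordCompl hp.out hm)
  rw [← Nat.factorization_def m hp.out, ← hunit.mul_right_dvd (a := (p : D) ^ _), ← Nat.cast_pow,
    ← Nat.cast_mul, Nat.ordProj_mul_ordCompl_eq_self]

theorem factorial_mul_pow_dvd_pow (hD : ∀ m : ℕ, p.Coprime m → IsUnit (m : D)) {a : D} {e k n : ℕ}
    (ha : (p : D) ^ e ∣ a) (h : padicValNat p n.factorial + k ≤ e * n) :
    (n.factorial : D) * (p : D) ^ k ∣ a ^ n := by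
  have hval : padicValNat p (n.factorial * p ^ k) = padicValNat p n.factorial + k := by
    rw [padicValNat.mul n.factorial_ne_zero (pow_ne_zero k hp.out.ne_zero), padicValNat.prime_pow]
  have hpow : (p : D) ^ (e * n) ∣ a ^ n := by
    obtain ⟨y, rfl⟩ := ha
    rw [((Nat.cast_commute p y).pow_left e).mul_pow, ← pow_mul]
    exact dvd_mul_right _ _
  rw [← Nat.cast_pow, ← Nat.cast_mul, natCast_dvd_iff_pow_padicValNat_dvd hD
    (mul_ne_zero n.factorial_ne_zero (pow_ne_zero k hp.out.ne_zero)), hval]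
  exact (pow_dvd_pow _ h).trans hpow

theorem exists_pow_dvd_and_factorial_nsmul_eq_pow
    (hD : ∀ m : ℕ, p.Coprime m → IsUnit (m : D)) {a : D} {e k n : ℕ}
    (ha : (p : D) ^ e ∣ a) (h : padicValNat p n.factorial + k ≤ e * n) :
    ∃ b : D, (p : D) ^ k ∣ b ∧ n.factorial • b = a ^ n := by
  obtain ⟨y, hy⟩ := factorial_mul_pow_dvd_pow hD ha h
  exact ⟨(p : D) ^ k * y, dvd_mul_right _ _, by rw [nsmul_eq_mul, hy, mul_assoc]⟩

theorem pow_dvd_of_factorial_nsmul_eq_pow [IsAddTorsionFree D]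
    (hD : ∀ m : ℕ, p.Coprime m → IsUnit (m : D)) {a b : D} {e k n : ℕ}
    (ha : (p : D) ^ e ∣ a) (h : padicValNat p n.factorial + k ≤ e * n)
    (hb : n.factorial • b = a ^ n) : (p : D) ^ k ∣ b := by
  obtain ⟨c, hc, hca⟩ := exists_pow_dvd_and_factorial_nsmul_eq_pow hD ha h
  rwa [nsmul_right_injective n.factorial_ne_zero (hb.trans hca.symm)]

theorem pow_div_factorial_mem_and_tendsto_zero_general [IsAddTorsionFree D]
    (hD : ∀ m : ℕ, p.Coprime m → IsUnit (m : D)) {e : ℕ} (he : 1 < e * (p - 1))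
    {a : D} (ha : (p : D) ^ e ∣ a) :
    (∀ n : ℕ, 1 ≤ n → ∃ b : D, (p : D) ^ e ∣ b ∧ n.factorial • b = a ^ n) ∧
      ∀ k : ℕ, ∃ N : ℕ, ∀ n : ℕ, N ≤ n → ∀ b : D, n.factorial • b = a ^ n → (p : D) ^ k ∣ b :=
  ⟨fun _ hn ↦ exists_pow_dvd_and_factorial_nsmul_eq_pow hD ha
      (padicValNat_factorial_add_self_le he hn),
    fun k ↦ ⟨2 * k, fun _ hn _ hb ↦ pow_dvd_of_factorial_nsmul_eq_pow hD ha
      (padicValNat_factorial_add_le he hn) hb⟩⟩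

end PLocal

section PadicIntAlgebra

variable {p : ℕ} [Fact p.Prime] {D : Type*}

theorem isUnit_natCast_of_coprime [Semiring D] [Algebra (PadicInt p) D] {m : ℕ}
    (hm : p.Coprime m) : IsUnit (m : D) := by
  have hunit : IsUnit (m : PadicInt p) :=
    PadicInt.isUnit_iff.2 (PadicInt.norm_natCast_eq_one_iff.2 hm)
  simpa using hunit.map (algebraMap (PadicInt p) D)

theorem isAddTorsionFree_of_padicInt_smul_injective [AddCommMonoid D] [Module (PadicInt p) D]
    (hTF : ∀ c : PadicInt p, c ≠ 0 → Function.Injective fun x : D ↦ c • x) :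
    IsAddTorsionFree D where
  nsmul_right_injective n hn := by
    simpa only [Nat.cast_smul_eq_nsmul] using hTF n (Nat.cast_ne_zero.2 hn)

end PadicIntAlgebra

/-- Let `D` be a torsion-free `ℤ_p`-algebra and `a ∈ 𝐩D`. Then for every
`n ≥ 1` the element `aⁿ/n!` exists in `𝐩D` (i.e. there is `b ∈ 𝐩D` with `n!·b = aⁿ`), and
`aⁿ/n! → 0` in the `p`-adic filtration topology. -/
theorem pow_div_factorial_mem_and_tendsto_zero (p : ℕ) [Fact p.Prime] (D : Type)
    [Ring D] [Algebra (PadicInt p) D]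
    (hTF : ∀ c : PadicInt p, c ≠ 0 → Function.Injective fun x : D => c • x)
    (a : D) (ha : ∃ y : D, a = padicBound p • y) :
    (∀ n : ℕ, 1 ≤ n → ∃ b : D,
        (∃ y : D, b = padicBound p • y) ∧ n.factorial • b = a ^ n) ∧
      (∀ k : ℕ, ∃ N : ℕ, ∀ n : ℕ, N ≤ n → ∀ b : D,
        n.factorial • b = a ^ n → ∃ y : D, b = p ^ k • y) := by
  have := isAddTorsionFree_of_padicInt_smul_injective hTF
  obtain ⟨e, hpe, he⟩ := exists_padicBound_eq_pow (Fact.out : p.Prime)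
  have nsmul_iff_dvd (k : ℕ) (b : D) : (∃ y : D, b = p ^ k • y) ↔ (p : D) ^ k ∣ b := by
    simp only [nsmul_eq_mul, Nat.cast_pow, dvd_def]
  simp only [hpe, nsmul_iff_dvd] at ha ⊢
  exact pow_div_factorial_mem_and_tendsto_zero_general (fun _ ↦ isUnit_natCast_of_coprime) he ha
end

section
/- Let p be a prime and set 𝐩 = p if p is odd and 𝐩 = 4 if p = 2. Let D be a (possibly noncommutative) ring that is an algebra over the ring ℤ_p of p-adic integers, torsion-free as a ℤ_p-module, and Hausdorff and complete with respect to the p-adic filtration p^i D. Let a ∈ 𝐩D, let u : ℕ → D satisfy i! · u_i = aⁱ for all i ≥ 0, and let x ∈ D be the p-adic limit of the partial sums u₀ + u₁ + ⋯ + u_n (i.e. for every k there is N such that x − (u₀ + ⋯ + u_n) ∈ p^k D for all n ≥ N); so x = e^a and x − 1 ∈ 𝐩D. Let c : ℕ → D satisfy i · c_i = (−1)^{i+1} (x − 1)ⁱ for all i ≥ 1. Then a is the p-adic limit of the partial sums c₁ + ⋯ + c_n, i.e. for every k there is N such that a − (c₁ + ⋯ + c_n) ∈ p^k D for all n ≥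 N. (In other words, log(e^a) = a.) -/
/-!
With `Q = p ^ n`, expand `x ^ Q` in two ways. Since `x ^ Q = e ^ (Q a)`, the exponential series
gives `(x ^ Q - 1) / Q ≡ a` modulo `p ^ n`. The binomial theorem for `(1 + (x - 1)) ^ Q` gives
`(x ^ Q - 1) / Q = ∑ (-1) ^ j * (Q - 1).choose j * c (j + 1)`, and `(-1) ^ j * (Q - 1).choose j`
tends to `1` as `n` grows, because `Q - 1` tends to `-1`. Hence the series of the `c (j + 1)` has
limit `a`.
-/

open Filter Finset
open scoped Nat

section Divisibility

section Semiring

variable {R : Type*} [Semiring R] {p : ℕ}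

theorem natCast_pow_dvd_iff_exists_nsmul {k : ℕ} {w : R} :
    (p : R) ^ k ∣ w ↔ ∃ y : R, w = p ^ k • y := by
  simp only [dvd_def, nsmul_eq_mul, Nat.cast_pow]

theorem natCast_pow_dvd_mul_left {k : ℕ} {b : R} (h : (p : R) ^ k ∣ b) (a : R) :
    (p : R) ^ k ∣ a * b := by
  obtain ⟨c, rfl⟩ := h
  exact ⟨a * c, (((p.cast_commute a).pow_left k).left_comm c).symm⟩

theorem natCast_pow_mul_dvd_pow {b : ℕ} {a : R} (h : (p : R) ^ b ∣ a) (i : ℕ) :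
    (p : R) ^ (b * i) ∣ a ^ i := by
  obtain ⟨y, rfl⟩ := h
  rw [((p.cast_commute y).pow_left b).mul_pow, pow_mul]
  exact dvd_mul_right _ _

end Semiring

variable {R : Type*} [Ring R] {p : ℕ}

theorem natCast_pow_dvd_of_coprime_mul {m k : ℕ} (hm : p.Coprime m) {w : R}
    (h : (p : R) ^ k ∣ m * w) : (p : R) ^ k ∣ w := by
  obtain ⟨s, t, hst⟩ := Nat.isCoprime_iff_coprime.2 (hm.pow_left k)
  have bezout : w = (p : R) ^ k * (s * w) + t * (m * w) := by
    have hR : (s : R) * (p : R) ^ k + t * m = 1 := by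
      exact_mod_cast congrArg (Int.cast (R := R)) hst
    rw [← mul_assoc, ← mul_assoc, ← (s.cast_commute ((p : R) ^ k)).eq, ← add_mul, hR, one_mul]
  rw [bezout]
  exact dvd_add (dvd_mul_right _ _) (natCast_pow_dvd_mul_left h _)

theorem natCast_pow_dvd_of_padicValNat_add_le [Fact p.Prime] (hp : IsLeftRegular (p : R))
    {m t k : ℕ} (hm : m ≠ 0) (hk : padicValNat p m + k ≤ t) {w : R}
    (h : (p : R) ^ t ∣ m * w) : (p : R) ^ k ∣ w := by
  have hprime : p.Prime := Fact.out
  apply natCast_pow_dvd_of_coprime_mul (Nat.coprime_ordCompl hprime hm)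
  rw [← (hp.pow (padicValNat p m)).dvd_cancel_left, ← pow_add, ← mul_assoc,
    ← Nat.factorization_def m hprime, ← Nat.cast_pow p (m.factorization p), ← Nat.cast_mul,
    Nat.ordProj_mul_ordCompl_eq_self, Nat.factorization_def m hprime]
  exact (pow_dvd_pow _ hk).trans h

theorem dvd_sub_sum_range_iff {q x : R} {f : ℕ → R} {K m : ℕ} (hKm : K ≤ m)
    (hf : ∀ i, K ≤ i → q ∣ f i) :
    q ∣ x - ∑ i ∈ range m, f i ↔ q ∣ x - ∑ i ∈ range K, f i := by
  apply dvd_iff_dvd_of_dvd_sub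
  rw [sub_sub_sub_cancel_left, dvd_sub_comm, ← sum_range_add_sum_Ico f hKm, add_sub_cancel_left]
  exact dvd_sum fun i hi => hf i (mem_Ico.1 hi).1

end Divisibility

theorem two_mul_padicValNat_le {p : ℕ} (hp : 2 ≤ p) (n : ℕ) : 2 * padicValNat p n ≤ n := by
  obtain rfl | hn := Nat.eq_zero_or_pos n
  · simp
  have two_mul_le_two_pow (v : ℕ) : 2 * v ≤ 2 ^ v := by
    cases v with
    | zero => simp
    | succ v => rw [pow_succ']; exact Nat.mul_le_mul_left 2 v.lt_two_pow_self
  calc 2 * padicValNat p n ≤ 2 ^ padicValNat p n := two_mul_le_two_pow _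
    _ ≤ p ^ padicValNat p n := Nat.pow_le_pow_left hp _
    _ ≤ n := Nat.le_of_dvd hn pow_padicValNat_dvd

theorem padicValNat_factorial_add_le_s11 {p : ℕ} [Fact p.Prime] {b i : ℕ} (hb : 1 ≤ b) (hi : 1 ≤ i) :
    padicValNat p i ! + b ≤ b * i := by
  have hlt := padicValNat_factorial_lt_of_ne_zero p (n := i) (by lia)
  obtain ⟨i, rfl⟩ := Nat.exists_eq_add_of_le' hi
  nlinarith

/-- Convergence of the sequence `s` to `x` for the filtration of the ring `R` by the subgroups
`p ^ k R`. Limits are unique only if `R` is Hausdorff for it. -/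
def PadicTendsto {R : Type*} [Ring R] (p : ℕ) (s : ℕ → R) (x : R) : Prop :=
  ∀ k, ∀ᶠ n in atTop, (p : R) ^ k ∣ x - s n

namespace PadicTendsto

variable {R : Type*} [Ring R] {p : ℕ}

theorem mul {s t : ℕ → R} {x y : R} (hs : PadicTendsto p s x) (ht : PadicTendsto p t y) :
    PadicTendsto p (fun n => s n * t n) (x * y) := by
  intro k
  filter_upwards [hs k, ht k] with n hsn htn
  rw [show x * y - s n * t n = (x - s n) * y + s n * (y - t n) by noncomm_ring]
  exact dvd_add (hsn.mul_right _) (natCast_pow_dvd_mul_left htn _)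

theorem mul_const {s : ℕ → R} {x : R} (hs : PadicTendsto p s x) (c : R) :
    PadicTendsto p (fun n => s n * c) (x * c) :=
  fun k => (hs k).mono fun n hn => by
    rw [← sub_mul]
    exact hn.mul_right c

theorem congr_of_sub {s t : ℕ → R} {x : R} (hs : PadicTendsto p s x)
    (hst : ∀ k, ∀ᶠ n in atTop, (p : R) ^ k ∣ s n - t n) : PadicTendsto p t x := by
  intro k
  filter_upwards [hs k, hst k] with n hsn hstn
  simpa using dvd_add hsn hstn

theorem eventually_dvd_of_sum_range {f : ℕ → R} {x : R}
    (hf : PadicTendsto p (fun n => ∑ i ∈ range n, f i) x) (k : ℕ) :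
    ∀ᶠ i in atTop, (p : R) ^ k ∣ f i := by
  filter_upwards [hf k, (tendsto_add_atTop_nat 1).eventually (hf k)] with i hi hi'
  simpa [sum_range_succ] using dvd_sub hi hi'

theorem dvd_sub_sum_range {f : ℕ → R} {x : R} {k m : ℕ}
    (hf : PadicTendsto p (fun n => ∑ i ∈ range n, f i) x) (hm : ∀ i, m ≤ i → (p : R) ^ k ∣ f i) :
    (p : R) ^ k ∣ x - ∑ i ∈ range m, f i := by
  obtain ⟨n, hn, hmn⟩ := ((hf k).and (eventually_ge_atTop m)).exists
  exact (dvd_sub_sum_range_iff hmn hm).1 hn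

theorem cauchyProduct {f g : ℕ → R} {x y : R}
    (hf : PadicTendsto p (fun n => ∑ i ∈ range n, f i) x)
    (hg : PadicTendsto p (fun n => ∑ i ∈ range n, g i) y) :
    PadicTendsto p (fun n => ∑ m ∈ range n, ∑ ij ∈ antidiagonal m, f ij.1 * g ij.2) (x * y) := by
  refine (hf.mul hg).congr_of_sub fun k => ?_
  obtain ⟨M, hM⟩ := eventually_atTop.1
    ((hf.eventually_dvd_of_sum_range k).and (hg.eventually_dvd_of_sum_range k))
  filter_upwards [eventually_ge_atTop (2 * M)] with n hn
  have triangle : ∑ m ∈ range n, ∑ ij ∈ antidiagonal m, f ij.1 * g ij.2 =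
      ∑ i ∈ range n, f i * ∑ j ∈ range (n - i), g j := by
    simp_rw [Nat.sum_antidiagonal_eq_sum_range_succ (fun i j => f i * g j), mul_sum]
    exact sum_range_diag_flip n fun i j => f i * g j
  rw [triangle, sum_mul, ← sum_sub_distrib]
  refine dvd_sum fun i _ => ?_
  rw [← mul_sub, ← sum_range_add_sum_Ico g (Nat.sub_le n i), add_sub_cancel_left]
  obtain hi | hi := le_or_gt M i
  · exact (hM i hi).1.mul_right _
  · refine natCast_pow_dvd_mul_left (dvd_sum fun j hj => (hM j ?_).2) _
    have := (mem_Ico.1 hj).1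
    lia

theorem sum_range_of_dominated {f : ℕ → ℕ → R} {g : ℕ → R} {N : ℕ → ℕ} {x : R}
    (hN : Tendsto N atTop atTop) (hdom : ∀ k, ∀ᶠ j in atTop, ∀ n, (p : R) ^ k ∣ f n j)
    (hfg : ∀ j, PadicTendsto p (fun n => f n j) (g j))
    (hf : PadicTendsto p (fun n => ∑ j ∈ range (N n), f n j) x) :
    PadicTendsto p (fun n => ∑ j ∈ range n, g j) x := by
  intro k
  obtain ⟨K, hK⟩ := eventually_atTop.1 (hdom k)
  have hgK : ∀ j, K ≤ j → (p : R) ^ k ∣ g j := fun j hj => by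
    obtain ⟨n, hn⟩ := (hfg j k).exists
    exact (dvd_iff_dvd_of_dvd_sub hn).2 (hK j hj n)
  obtain ⟨n, hxn, hNn, hfgn⟩ := ((hf k).and ((hN.eventually_ge_atTop K).and
    ((eventually_all_finset (range K)).2 fun j _ => hfg j k))).exists
  have hxK : (p : R) ^ k ∣ x - ∑ j ∈ range K, g j := by
    have hx := (dvd_sub_sum_range_iff hNn fun j hj => hK j hj n).1 hxn
    simpa using dvd_sub hx (dvd_sum hfgn)
  filter_upwards [eventually_ge_atTop K] with m hm
  exact (dvd_sub_sum_range_iff hm hgK).2 hxK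

end PadicTendsto

section Exponential

/-- `u i` is the term `a ^ i / i !` of the exponential series; the division by `i !` is encoded as
an equation, so `u` is determined by `a` only if `R` is torsion-free. -/
def IsExpTerms {R : Type*} [Semiring R] (a : R) (u : ℕ → R) : Prop :=
  ∀ i, (i ! : R) * u i = a ^ i

namespace IsExpTerms

section Semiring

variable {R : Type*} [Semiring R]

theorem apply_zero {a : R} {u : ℕ → R} (hu : IsExpTerms a u) : u 0 = 1 := by
  simpa using hu 0

theorem apply_one {a : R} {u : ℕ → R} (hu : IsExpTerms a u) : u 1 = a := by
  simpa using hu 1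

theorem add_of_commute {a b : R} {u v : ℕ → R} (hu : IsExpTerms a u)
    (hv : IsExpTerms b v) (hab : Commute a b) :
    IsExpTerms (a + b) fun n => ∑ ij ∈ antidiagonal n, u ij.1 * v ij.2 := by
  intro n
  rw [hab.add_pow', mul_sum]
  refine sum_congr rfl fun ij hij => ?_
  have factorial_split : (n ! : R) = n.choose ij.1 * (ij.1 ! * ij.2 !) := by
    rw [← mem_antidiagonal.1 hij, ← Nat.add_choose_mul_factorial_mul_factorial]
    push_cast
    rw [mul_assoc, Nat.choose_symm_add]
  rw [factorial_split, nsmul_eq_mul, ← hu, ← hv, mul_assoc,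
    ((ij.2 !).cast_commute (u ij.1)).mul_mul_mul_comm]

end Semiring

theorem natCast_pow_dvd {R : Type*} [Ring R] {p : ℕ} [Fact p.Prime]
    (hp : IsLeftRegular (p : R)) {a : R} {u : ℕ → R} (hu : IsExpTerms a u) {b i k : ℕ}
    (ha : (p : R) ^ b ∣ a) (hk : padicValNat p i ! + k ≤ b * i) : (p : R) ^ k ∣ u i := by
  refine natCast_pow_dvd_of_padicValNat_add_le hp i.factorial_ne_zero hk ?_
  rw [hu i]
  exact natCast_pow_mul_dvd_pow ha i

end IsExpTerms

variable {R : Type*} [Ring R] {p : ℕ}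

/-- `x = e ^ a`, the limit of an exponential series of `a` for the filtration by the `p ^ k R`. -/
def IsPadicExp (p : ℕ) (a x : R) : Prop :=
  ∃ u : ℕ → R, IsExpTerms a u ∧ PadicTendsto p (fun n => ∑ i ∈ range n, u i) x

namespace IsPadicExp

theorem zero : IsPadicExp p (0 : R) 1 := by
  refine ⟨fun i => 0 ^ i, fun i => by cases i <;> simp, fun k => ?_⟩
  filter_upwards [eventually_ge_atTop 1] with n hn
  simp [zero_pow_eq, Nat.pos_of_ne_zero (show n ≠ 0 by lia)]

theorem add_of_commute {a b x y : R} (hx : IsPadicExp p a x) (hy : IsPadicExp p b y)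
    (hab : Commute a b) : IsPadicExp p (a + b) (x * y) := by
  obtain ⟨u, hu, hux⟩ := hx
  obtain ⟨v, hv, hvy⟩ := hy
  exact ⟨_, hu.add_of_commute hv hab, hux.cauchyProduct hvy⟩

theorem natCast_mul {a x : R} (hx : IsPadicExp p a x) (n : ℕ) : IsPadicExp p (n * a) (x ^ n) := by
  induction n with
  | zero => simpa using zero
  | succ n ih =>
    rw [Nat.cast_succ, add_one_mul, pow_succ]
    exact ih.add_of_commute hx ((n.cast_commute a).mul_left (Commute.refl a))

theorem pow_dvd_sub_one [Fact p.Prime] (hp : IsLeftRegular (p : R)) {a x : R}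
    (hx : IsPadicExp p a x) {b : ℕ} (hb : 1 ≤ b) (ha : (p : R) ^ b ∣ a) :
    (p : R) ^ b ∣ x - 1 := by
  obtain ⟨u, hu, hux⟩ := hx
  have h := hux.dvd_sub_sum_range fun i (hi : 1 ≤ i) =>
    hu.natCast_pow_dvd hp ha (padicValNat_factorial_add_le_s11 hb hi)
  rwa [sum_range_one, hu.apply_zero] at h

theorem pow_dvd_sub_one_sub_self [Fact p.Prime] (hp : IsLeftRegular (p : R)) {a x : R}
    (hx : IsPadicExp p a x) {n : ℕ} (ha : (p : R) ^ (n + 1) ∣ a) :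
    (p : R) ^ (2 * n) ∣ x - 1 - a := by
  obtain ⟨u, hu, hux⟩ := hx
  have h := hux.dvd_sub_sum_range fun i (hi : 2 ≤ i) => hu.natCast_pow_dvd hp ha (k := 2 * n) <| by
    have := padicValNat_factorial_lt_of_ne_zero p (n := i) (by lia)
    nlinarith
  rwa [sum_range_succ, sum_range_one, hu.apply_zero, hu.apply_one, ← sub_sub] at h

end IsPadicExp

end Exponential

theorem add_one_dvd_factorial_mul_one_sub_choose (m j : ℕ) :
    (m + 1 : ℤ) ∣ j ! * (1 - (-1) ^ j * m.choose j) := by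
  have eval_m : (descPochhammer ℤ j).eval (m : ℤ) = j ! * m.choose j := by
    rw [descPochhammer_eval_eq_descFactorial, Nat.descFactorial_eq_factorial_mul_choose]
    push_cast
    rfl
  have eval_neg_one : (-1) ^ j * (descPochhammer ℤ j).eval (-1) = (j ! : ℤ) := by
    rw [← ascPochhammer_eval_neg_eq_descPochhammer, neg_neg, ascPochhammer_eval_one]
  have hdvd := (Polynomial.sub_dvd_eval_sub (-1) (m : ℤ) (descPochhammer ℤ j)).mul_left ((-1) ^ j)
  rw [mul_sub, eval_neg_one, eval_m, ← neg_dvd] at hdvd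
  calc (m + 1 : ℤ) = -(-1 - m) := by ring
    _ ∣ (j ! : ℤ) - (-1) ^ j * (j ! * m.choose j) := hdvd
    _ = j ! * (1 - (-1) ^ j * m.choose j) := by ring

theorem padicTendsto_choose_pow_sub_one (R : Type*) [Ring R] (p : ℕ) [Fact p.Prime] (j : ℕ) :
    PadicTendsto p (fun n => (-1) ^ j * ((p ^ n - 1).choose j : R)) 1 := by
  have hprime : p.Prime := Fact.out
  have hp : IsLeftRegular (p : ℤ) :=
    (IsRegular.of_ne_zero (Nat.cast_ne_zero.2 hprime.ne_zero)).left
  intro k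
  filter_upwards [eventually_ge_atTop (padicValNat p j ! + k)] with n hn
  have hdvd := add_one_dvd_factorial_mul_one_sub_choose (p ^ n - 1) j
  rw [← Nat.cast_add_one, Nat.sub_add_cancel (Nat.one_le_pow _ _ hprime.pos),
    Nat.cast_pow] at hdvd
  have hk := natCast_pow_dvd_of_padicValNat_add_le hp j.factorial_ne_zero hn hdvd
  simpa using map_dvd (Int.castRingHom R) hk

section Logarithm

variable {R : Type*} [Ring R] {p : ℕ}

/-- `c j` is the term `(-1) ^ j * z ^ (j + 1) / (j + 1)` of the series of `log (1 + z)`; the index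
is shifted by one, so the series starts at `j = 0`. -/
def IsLogTerms (z : R) (c : ℕ → R) : Prop :=
  ∀ j, ((j + 1 : ℕ) : R) * c j = (-1) ^ j * z ^ (j + 1)

namespace IsLogTerms

theorem eventually_natCast_pow_dvd [Fact p.Prime] (hp : IsLeftRegular (p : R)) {z : R}
    {c : ℕ → R} (hc : IsLogTerms z c) (hz : (p : R) ∣ z) (k : ℕ) :
    ∀ᶠ j in atTop, (p : R) ^ k ∣ c j := by
  filter_upwards [eventually_ge_atTop (2 * k)] with j hj
  have hval := two_mul_padicValNat_le (Fact.out : p.Prime).two_le (j + 1)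
  refine natCast_pow_dvd_of_padicValNat_add_le hp j.succ_ne_zero (t := j + 1) (by lia) ?_
  rw [hc j]
  refine natCast_pow_dvd_mul_left ?_ _
  simpa using natCast_pow_mul_dvd_pow (b := 1) (by simpa using hz) (j + 1)

theorem pow_succ_sub_one {x : R} {c : ℕ → R} (hc : IsLogTerms (x - 1) c) (m : ℕ) :
    x ^ (m + 1) - 1 =
      ((m + 1 : ℕ) : R) * ∑ j ∈ range (m + 1), (-1) ^ j * (m.choose j : R) * c j := by
  have binomial : x ^ (m + 1) - 1 =
      ∑ j ∈ range (m + 1), ((m + 1).choose (j + 1) : R) * (x - 1) ^ (j + 1) := by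
    conv_lhs => rw [← sub_add_cancel x 1]
    rw [(Commute.one_right (x - 1)).add_pow, sum_range_succ']
    simp [Nat.cast_comm]
  rw [binomial, mul_sum]
  refine sum_congr rfl fun j _ => ?_
  have absorption : ((m + 1 : ℕ) : R) * m.choose j = (m + 1).choose (j + 1) * (j + 1 : ℕ) := by
    exact_mod_cast congrArg (Nat.cast (R := R)) (Nat.add_one_mul_choose_eq m j)
  have power : (x - 1) ^ (j + 1) = (-1) ^ j * (((j + 1 : ℕ) : R) * c j) := by
    rw [hc j, ← mul_assoc, ← pow_add, (Even.add_self j).neg_one_pow, one_mul]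
  calc ((m + 1).choose (j + 1) : R) * (x - 1) ^ (j + 1)
      = (-1) ^ j * ((m + 1).choose (j + 1) * (j + 1 : ℕ) * c j) := by
        rw [power, (Nat.cast_commute _ _).left_comm, mul_assoc]
    _ = (m + 1 : ℕ) * ((-1) ^ j * m.choose j * c j) := by
        rw [← absorption, mul_assoc, ← (Nat.cast_commute _ _).left_comm, mul_assoc ((-1) ^ j)]

end IsLogTerms

theorem IsPadicExp.padicTendsto_sum_choose_mul [Fact p.Prime] (hp : IsLeftRegular (p : R))
    {a x : R} (hx : IsPadicExp p a x) (ha : (p : R) ∣ a) {c : ℕ → R}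
    (hc : IsLogTerms (x - 1) c) :
    PadicTendsto p
      (fun n => ∑ j ∈ range (p ^ n), (-1) ^ j * ((p ^ n - 1).choose j : R) * c j) a := by
  have dvd_approx (n : ℕ) : (p : R) ^ n ∣
      a - ∑ j ∈ range (p ^ n), (-1) ^ j * ((p ^ n - 1).choose j : R) * c j := by
    have hexp := (hx.natCast_mul (p ^ n)).pow_dvd_sub_one_sub_self hp (n := n) <| by
      rw [Nat.cast_pow, pow_succ]
      exact mul_dvd_mul_left _ ha
    have hlog := hc.pow_succ_sub_one (p ^ n - 1)
    rw [Nat.sub_add_cancel (Nat.one_le_pow _ _ (Fact.out : p.Prime).pos)] at hlog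
    rw [hlog, ← mul_sub, Nat.cast_pow, two_mul, pow_add, (hp.pow n).dvd_cancel_left] at hexp
    exact dvd_sub_comm.1 hexp
  intro k
  filter_upwards [eventually_ge_atTop k] with n hn
  exact (pow_dvd_pow _ hn).trans (dvd_approx n)

theorem IsPadicExp.padicTendsto_log [Fact p.Prime] (hp : IsLeftRegular (p : R))
    {a x : R} (hx : IsPadicExp p a x) (ha : (p : R) ∣ a) {c : ℕ → R}
    (hc : IsLogTerms (x - 1) c) : PadicTendsto p (fun n => ∑ j ∈ range n, c j) a := by
  have hx1 : (p : R) ∣ x - 1 := by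
    simpa using hx.pow_dvd_sub_one hp le_rfl (by simpa using ha)
  refine PadicTendsto.sum_range_of_dominated
    (tendsto_pow_atTop_atTop_of_one_lt (Fact.out : p.Prime).one_lt) (fun k => ?_) (fun j => ?_)
    (hx.padicTendsto_sum_choose_mul hp ha hc)
  · filter_upwards [hc.eventually_natCast_pow_dvd hp hx1 k] with j hj n
    exact natCast_pow_dvd_mul_left hj _
  · simpa using (padicTendsto_choose_pow_sub_one R p j).mul_const (c j)

end Logarithm

theorem exists_padicBound_eq_pow_s11 (p : ℕ) : ∃ b, 1 ≤ b ∧ padicBound p = p ^ b := by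
  obtain rfl | hp := eq_or_ne p 2
  · exact ⟨2, by simp, by simp [padicBound]⟩
  · exact ⟨1, le_rfl, by simp [padicBound, hp]⟩

theorem isSMulRegular_natCast_iff {S M : Type*} [Semiring S] [AddCommMonoid M] [Module S M]
    {n : ℕ} : IsSMulRegular M (n : S) ↔ IsSMulRegular M n := by
  simp only [IsSMulRegular, Nat.cast_smul_eq_nsmul]

theorem log_exp_eq_general {p : ℕ} [Fact p.Prime] {R : Type*} [Ring R]
    (hp : IsSMulRegular R p) {b : ℕ} (hb : 1 ≤ b)
    (a : R) (ha : ∃ y : R, a = p ^ b • y)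
    (u : ℕ → R) (hu : ∀ i : ℕ, i.factorial • u i = a ^ i)
    (x : R)
    (hx : ∀ k : ℕ, ∃ N : ℕ, ∀ n : ℕ, N ≤ n →
      ∃ y : R, x - (∑ i ∈ range (n + 1), u i) = p ^ k • y)
    (c : ℕ → R)
    (hc : ∀ i : ℕ, 1 ≤ i → i • c i = (-1 : ℤ) ^ (i + 1) • (x - 1) ^ i) :
    (∃ y : R, x - 1 = p ^ b • y) ∧
      ∀ k : ℕ, ∃ N : ℕ, ∀ n : ℕ, N ≤ n →
        ∃ y : R, a - (∑ i ∈ Icc 1 n, c i) = p ^ k • y := by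
  simp only [← natCast_pow_dvd_iff_exists_nsmul] at ha hx ⊢
  have hreg : IsLeftRegular (p : R) := fun v w h => hp (by simpa only [nsmul_eq_mul] using h)
  have hexp : IsPadicExp p a x := by
    refine ⟨u, fun i => by rw [← nsmul_eq_mul, hu], fun k => ?_⟩
    rw [← map_add_atTop_eq_nat 1]
    exact eventually_atTop.2 (hx k)
  have hlog : IsLogTerms (x - 1) fun j => c (j + 1) := fun j => by
    rw [← nsmul_eq_mul, hc (j + 1) j.succ_pos]
    simp [pow_succ]
  refine ⟨hexp.pow_dvd_sub_one hreg hb ha, fun k => ?_⟩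
  have hlim := hexp.padicTendsto_log hreg ((dvd_pow_self _ (by lia)).trans ha) hlog k
  simpa only [range_eq_Ico, sum_Ico_add' c, zero_add, Ico_add_one_right_eq_Icc,
    eventually_atTop] using hlim

/-- `log (e^a) = a`. Let `D` be a torsion-free `ℤ_p`-algebra, complete
and Hausdorff for the `p`-adic filtration `p^i D`. Let `a ∈ 𝐩D`, let `u i = aⁱ/i!`, and let
`x = e^a` be the `p`-adic limit of the partial sums `u₀ + ⋯ + u_n`; then `x − 1 ∈ 𝐩D`.
If `c i = (−1)^{i+1}(x−1)ⁱ/i` for `i ≥ 1`, then `a` is the `p`-adic limit of the partial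
sums `c₁ + ⋯ + c_n`. -/
theorem log_exp_eq (p : ℕ) [Fact p.Prime] (D : Type) [Ring D] [Algebra (PadicInt p) D]
    (hTF : ∀ c : PadicInt p, c ≠ 0 → Function.Injective fun x : D => c • x)
    [IsAdicComplete (Ideal.span {(p : PadicInt p)}) D]
    (a : D) (ha : ∃ y : D, a = padicBound p • y)
    (u : ℕ → D) (hu : ∀ i : ℕ, i.factorial • u i = a ^ i)
    (x : D)
    (hx : ∀ k : ℕ, ∃ N : ℕ, ∀ n : ℕ, N ≤ n →
      ∃ y : D, x - (∑ i ∈ Finset.range (n + 1), u i) = p ^ k • y)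
    (c : ℕ → D)
    (hc : ∀ i : ℕ, 1 ≤ i → i • c i = (-1 : ℤ) ^ (i + 1) • (x - 1) ^ i) :
    (∃ y : D, x - 1 = padicBound p • y) ∧
      ∀ k : ℕ, ∃ N : ℕ, ∀ n : ℕ, N ≤ n →
        ∃ y : D, a - (∑ i ∈ Finset.Icc 1 n, c i) = p ^ k • y := by
  obtain ⟨b, hb, hpb⟩ := exists_padicBound_eq_pow_s11 p
  rw [hpb] at ha ⊢
  have hp : IsSMulRegular D p :=
    isSMulRegular_natCast_iff.1 (hTF p (Nat.cast_ne_zero.2 (Fact.out : p.Prime).ne_zero))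
  exact log_exp_eq_general hp hb a ha u hu x hx c hc
end
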